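/- arXiv:2602.08721 — 4 statements merged into one kernel-verified Lean document; each statement's English description precedes it below -/
import Mathlib

section
/- The series identity ∑_{n≥1} (−1/4)^n · (1)_n / ((1/2)_n) · ( H_n/n³ − 3/(10 n⁴) ) = −π⁴/300 holds. -/
/-- The rising factorial (Pochhammer symbol) `(a)ₙ = a(a+1)⋯(a+n-1)`. -/
noncomputable def risingFactorial (a : ℝ) (n : ℕ) : ℝ :=
  ∏ i ∈ Finset.range n, (a + i)

/-- The generalized harmonic number `H_n^{(s)} = ∑_{k=1}^n 1/k^s`. -/
noncomputable def genHarmonic (s n : ℕ) : ℝ :=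
  ∑ k ∈ Finset.range n, 1 / ((k : ℝ) + 1) ^ s

open Filter Topology Finset

/-- The derivative of `log (x)ₙ`: the sum `∑_{j<n} 1/(x+j)`. -/
noncomputable def shiftedHarmonic (x : ℝ) (n : ℕ) : ℝ :=
  ∑ j ∈ range n, 1 / (x + j)

/-- The coefficient `(-1)ⁿ n!⁶ / (2 (2n)!)` of Markov's WZ pair for `∑ 1/(x+k)³`. -/
noncomputable def markovCoeff (n : ℕ) : ℝ :=
  (-1) ^ n * (n.factorial : ℝ) ^ 6 / (2 * ((2 * n).factorial : ℝ))

/-- The `x`-derivative of the first member `cₙ (2x+n) / (x)ₙ₊₁⁴` of Markov's WZ pair. -/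
noncomputable def markovF (n : ℕ) (x : ℝ) : ℝ :=
  markovCoeff n * (2 - 4 * (2 * x + n) * shiftedHarmonic x (n + 1)) /
    risingFactorial x (n + 1) ^ 4

/-- The `x`-derivative of the second member
`cₙ (5(n+1)² + 6(n+1)(x-1) + 2(x-1)²) / (2(2n+1) (x)ₙ₊₁⁴)` of Markov's WZ pair. -/
noncomputable def markovT (n : ℕ) (x : ℝ) : ℝ :=
  markovCoeff n / (2 * (2 * n + 1)) *
    (6 * (n + 1) + 4 * (x - 1) - 4 * shiftedHarmonic x (n + 1) *
      (5 * (n + 1) ^ 2 + 6 * (n + 1) * (x - 1) + 2 * (x - 1) ^ 2)) /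
    risingFactorial x (n + 1) ^ 4

theorem risingFactorial_succ (x : ℝ) (n : ℕ) :
    risingFactorial x (n + 1) = risingFactorial x n * (x + n) :=
  prod_range_succ _ _

theorem risingFactorial_succ_left (x : ℝ) (n : ℕ) :
    risingFactorial x (n + 1) = x * risingFactorial (x + 1) n := by
  simp only [risingFactorial, prod_range_succ', Nat.cast_add, Nat.cast_one, Nat.cast_zero, add_zero]
  rw [mul_comm]
  congr 1
  exact prod_congr rfl fun i _ => by ring

theorem shiftedHarmonic_succ (x : ℝ) (n : ℕ) :
    shiftedHarmonic x (n + 1) = shiftedHarmonic x n + 1 / (x + n) :=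
  sum_range_succ _ _

theorem shiftedHarmonic_succ_left (x : ℝ) (n : ℕ) :
    shiftedHarmonic x (n + 1) = 1 / x + shiftedHarmonic (x + 1) n := by
  simp only [shiftedHarmonic, sum_range_succ', Nat.cast_add, Nat.cast_one, Nat.cast_zero, add_zero]
  rw [add_comm]
  congr 1
  exact sum_congr rfl fun i _ => by ring

theorem risingFactorial_pos {x : ℝ} (hx : 0 < x) (n : ℕ) : 0 < risingFactorial x n :=
  prod_pos fun _ _ => by positivity

theorem risingFactorial_one (n : ℕ) : risingFactorial 1 n = n.factorial := by
  induction n with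
  | zero => simp [risingFactorial]
  | succ n ih => rw [risingFactorial_succ, ih, Nat.factorial_succ]; push_cast; ring

theorem risingFactorial_half_mul (n : ℕ) :
    risingFactorial (1 / 2) n * (4 ^ n * n.factorial) = (2 * n).factorial := by
  induction n with
  | zero => simp [risingFactorial]
  | succ n ih =>
    rw [risingFactorial_succ, show 2 * (n + 1) = 2 * n + 1 + 1 by ring, Nat.factorial_succ,
      Nat.factorial_succ, Nat.factorial_succ]
    push_cast
    rw [← ih]
    ring

theorem factorial_mul_le_risingFactorial {x : ℝ} (hx : 0 < x) (n : ℕ) :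
    n.factorial * x ≤ risingFactorial x (n + 1) := by
  rw [risingFactorial_succ_left, mul_comm, ← risingFactorial_one]
  gcongr
  exact prod_le_prod (fun _ _ => by positivity) fun _ _ => by linarith

theorem shiftedHarmonic_nonneg {x : ℝ} (hx : 0 < x) (n : ℕ) : 0 ≤ shiftedHarmonic x n :=
  sum_nonneg fun _ _ => by positivity

theorem shiftedHarmonic_le {x : ℝ} (hx : 0 < x) (n : ℕ) : shiftedHarmonic x n ≤ n / x := by
  have h : ∀ j ∈ range n, 1 / (x + j) ≤ 1 / x := fun j _ =>
    one_div_le_one_div_of_le hx (by linarith [(Nat.cast_nonneg j : (0 : ℝ) ≤ j)])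
  calc shiftedHarmonic x n ≤ _ := sum_le_card_nsmul _ _ _ h
    _ = n / x := by simp [div_eq_mul_inv]

theorem markovCoeff_succ (n : ℕ) :
    markovCoeff (n + 1) = -markovCoeff n * (n + 1) ^ 5 / (2 * (2 * n + 1)) := by
  unfold markovCoeff
  rw [show 2 * (n + 1) = 2 * n + 1 + 1 by ring, Nat.factorial_succ (2 * n + 1),
    Nat.factorial_succ (2 * n), Nat.factorial_succ n]
  have := Nat.factorial_pos (2 * n)
  push_cast
  field_simp
  ring

theorem markovF_sub_markovF_succ (n : ℕ) {x : ℝ} (hx : 0 < x) :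
    markovF n x - markovF (n + 1) x = markovT n x - markovT n (x + 1) := by
  have hP := risingFactorial_pos (show 0 < x + 1 by linarith) n
  unfold markovF markovT
  rw [risingFactorial_succ_left x (n + 1), risingFactorial_succ_left x n,
    risingFactorial_succ (x + 1) n, shiftedHarmonic_succ_left x (n + 1),
    shiftedHarmonic_succ_left x n, shiftedHarmonic_succ (x + 1) n, markovCoeff_succ]
  generalize risingFactorial (x + 1) n = P at *
  generalize shiftedHarmonic (x + 1) n = h
  generalize markovCoeff n = c
  have hn : (0 : ℝ) ≤ n := Nat.cast_nonneg n
  push_cast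
  generalize (n : ℝ) = m at *
  have h1 : x + 1 + m ≠ 0 := by positivity
  have h2 : 2 * m + 1 ≠ 0 := by positivity
  field_simp
  ring

theorem two_pow_le_centralBinom (n : ℕ) : 2 ^ n ≤ n.centralBinom := by
  induction n with
  | zero => simp
  | succ n ih =>
    have h := Nat.succ_mul_centralBinom_succ n
    rw [pow_succ]
    nlinarith

theorem abs_markovCoeff_div_le (n : ℕ) {x : ℝ} (hx : 0 < x) :
    |markovCoeff n| / risingFactorial x (n + 1) ^ 4 ≤ (1 / 2) ^ n / (2 * x ^ 4) := by
  have hf : (0 : ℝ) < n.factorial := by exact_mod_cast Nat.factorial_pos n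
  have hf2 : (0 : ℝ) < (2 * n).factorial := by exact_mod_cast Nat.factorial_pos _
  have hb : (2 : ℝ) ^ n * (n.factorial * n.factorial) ≤ (2 * n).factorial := by
    have h := Nat.choose_mul_factorial_mul_factorial (show n ≤ 2 * n by lia)
    rw [show 2 * n - n = n by lia, ← Nat.centralBinom_eq_two_mul_choose, mul_assoc] at h
    rw [← h]
    exact_mod_cast Nat.mul_le_mul_right _ (two_pow_le_centralBinom n)
  have hc : |markovCoeff n| = (n.factorial : ℝ) ^ 6 / (2 * (2 * n).factorial) := by
    simp [markovCoeff, abs_div, abs_mul]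
  calc |markovCoeff n| / risingFactorial x (n + 1) ^ 4
      ≤ |markovCoeff n| / (n.factorial * x) ^ 4 := by
        gcongr
        exact factorial_mul_le_risingFactorial hx n
    _ = n.factorial * n.factorial / (2 * n).factorial / (2 * x ^ 4) := by
        rw [hc]; field_simp
    _ ≤ (1 / 2) ^ n / (2 * x ^ 4) := by
        gcongr
        rw [div_pow, one_pow, div_le_div_iff₀ hf2 (by positivity)]
        linarith

theorem abs_markovF_le (n : ℕ) {x : ℝ} (hx : 1 ≤ x) :
    |markovF n x| ≤ 5 * ((n + 1) ^ 3 * (1 / 2) ^ n) * (1 / x ^ 4) := by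
  have hx0 : 0 < x := by linarith
  have hn : (0 : ℝ) ≤ n := Nat.cast_nonneg n
  have h0 := shiftedHarmonic_nonneg hx0 (n + 1)
  have h1 := shiftedHarmonic_le hx0 (n + 1)
  have h2 : (2 * x + n) * shiftedHarmonic x (n + 1) ≤ (n + 2) * (n + 1) := by
    calc (2 * x + n) * shiftedHarmonic x (n + 1)
        ≤ ((n + 2) * x) * (((n + 1 : ℕ) : ℝ) / x) := by gcongr; nlinarith
      _ = (n + 2) * (n + 1) := by push_cast; field_simp
  have h3 : 0 ≤ (2 * x + n) * shiftedHarmonic x (n + 1) := by positivity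
  have h4 : |2 - 4 * (2 * x + n) * shiftedHarmonic x (n + 1)| ≤ 10 * (n + 1) ^ 3 := by
    rw [abs_le]
    constructor <;> nlinarith [mul_nonneg hn hn, mul_nonneg (mul_nonneg hn hn) hn]
  have hP := risingFactorial_pos hx0 (n + 1)
  calc |markovF n x| = |markovCoeff n| / risingFactorial x (n + 1) ^ 4 *
        |2 - 4 * (2 * x + n) * shiftedHarmonic x (n + 1)| := by
        rw [markovF, abs_div, abs_mul, abs_of_pos (pow_pos hP 4)]; ring
    _ ≤ (1 / 2) ^ n / (2 * x ^ 4) * (10 * (n + 1) ^ 3) := by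
        exact mul_le_mul (abs_markovCoeff_div_le n hx0) h4 (abs_nonneg _) (by positivity)
    _ = _ := by field_simp; ring

theorem abs_markovT_le (n : ℕ) {x : ℝ} (hx : 1 ≤ x) :
    |markovT n x| ≤ 31 * ((n + 1) ^ 3 * (1 / 2) ^ n) * (1 / x ^ 2) := by
  have hx0 : 0 < x := by linarith
  have hn : (0 : ℝ) ≤ n := Nat.cast_nonneg n
  obtain ⟨N, hN⟩ : ∃ N : ℝ, N = n + 1 := ⟨_, rfl⟩
  have hN1 : 1 ≤ N := by linarith
  have h0 := shiftedHarmonic_nonneg hx0 (n + 1)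
  have h1 : shiftedHarmonic x (n + 1) ≤ N := by
    refine (shiftedHarmonic_le hx0 (n + 1)).trans ?_
    push_cast
    rw [← hN]
    exact div_le_self (by linarith) hx
  have hq0 : 0 ≤ 5 * N ^ 2 + 6 * N * (x - 1) + 2 * (x - 1) ^ 2 := by
    have : 0 ≤ x - 1 := by linarith
    positivity
  have hxx : x - 1 ≤ N * x := by nlinarith
  have hq : 5 * N ^ 2 + 6 * N * (x - 1) + 2 * (x - 1) ^ 2 ≤ 13 * (N ^ 2 * x ^ 2) := by
    have a1 : N ^ 2 ≤ N ^ 2 * x ^ 2 := le_mul_of_one_le_right (by positivity) (one_le_pow₀ hx)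
    have a2 : N * (x - 1) ≤ N ^ 2 * x ^ 2 := by
      calc N * (x - 1) ≤ (N * x) * (N * x) := by
            gcongr
            nlinarith
        _ = _ := by ring
    have a3 : (x - 1) ^ 2 ≤ N ^ 2 * x ^ 2 := by
      rw [← mul_pow]
      exact pow_le_pow_left₀ (by linarith) hxx 2
    linarith
  have hl : 6 * N + 4 * (x - 1) ≤ 10 * (N ^ 3 * x ^ 2) := by
    have a1 : N * x ≤ N ^ 3 * x ^ 2 := by
      gcongr
      · exact le_self_pow₀ hN1 (by norm_num)
      · exact le_self_pow₀ hx (by norm_num)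
    nlinarith
  have hh : shiftedHarmonic x (n + 1) * (5 * N ^ 2 + 6 * N * (x - 1) + 2 * (x - 1) ^ 2) ≤
      13 * (N ^ 3 * x ^ 2) := by
    calc _ ≤ N * (13 * (N ^ 2 * x ^ 2)) := by gcongr
      _ = _ := by ring
  have hh0 := mul_nonneg h0 hq0
  have h4 : |6 * N + 4 * (x - 1) - 4 * shiftedHarmonic x (n + 1) *
      (5 * N ^ 2 + 6 * N * (x - 1) + 2 * (x - 1) ^ 2)| ≤ 62 * (N ^ 3 * x ^ 2) := by
    have : 0 ≤ N ^ 3 * x ^ 2 := by positivity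
    rw [abs_le]
    constructor <;> nlinarith
  have hP := risingFactorial_pos hx0 (n + 1)
  have hd : (1 : ℝ) ≤ 2 * (2 * n + 1) := by linarith
  have hd0 : (0 : ℝ) < 2 * (2 * n + 1) := by linarith
  rw [hN] at h4
  calc |markovT n x| = |markovCoeff n| / risingFactorial x (n + 1) ^ 4 / (2 * (2 * n + 1)) *
        |6 * ((n : ℝ) + 1) + 4 * (x - 1) - 4 * shiftedHarmonic x (n + 1) *
          (5 * (n + 1) ^ 2 + 6 * (n + 1) * (x - 1) + 2 * (x - 1) ^ 2)| := by
        rw [markovT, abs_div, abs_mul, abs_div, abs_of_pos (pow_pos hP 4), abs_of_pos hd0]; ring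
    _ ≤ |markovCoeff n| / risingFactorial x (n + 1) ^ 4 * (62 * ((n + 1) ^ 3 * x ^ 2)) := by
        exact mul_le_mul (div_le_self (by positivity) hd) h4 (abs_nonneg _) (by positivity)
    _ ≤ (1 / 2) ^ n / (2 * x ^ 4) * (62 * ((n + 1) ^ 3 * x ^ 2)) := by
        exact mul_le_mul_of_nonneg_right (abs_markovCoeff_div_le n hx0) (by positivity)
    _ = _ := by field_simp; ring

theorem summable_succ_cube_mul_half_pow :
    Summable fun n : ℕ => ((n : ℝ) + 1) ^ 3 * (1 / 2 : ℝ) ^ n := by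
  have h := summable_pow_mul_geometric_of_norm_lt_one (R := ℝ) 3 (r := 1 / 2) (by norm_num)
  refine (((summable_nat_add_iff 1).mpr h).mul_left 2).congr fun n => ?_
  push_cast
  ring

theorem hasSum_one_div_succ_pow_four :
    HasSum (fun k : ℕ => 1 / ((k : ℝ) + 1) ^ 4) (Real.pi ^ 4 / 90) := by
  have h := (hasSum_nat_add_iff' 1).mpr hasSum_zeta_four
  simpa using h

theorem one_le_natCast_add_one (k : ℕ) : (1 : ℝ) ≤ k + 1 := by
  linarith [(Nat.cast_nonneg k : (0 : ℝ) ≤ k)]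

theorem summable_markovF (n : ℕ) : Summable fun k : ℕ => markovF n (k + 1) :=
  Summable.of_norm_bounded (hasSum_one_div_succ_pow_four.summable.mul_left _)
    fun k => abs_markovF_le n (one_le_natCast_add_one k)

theorem tendsto_tsum_markovF :
    Tendsto (fun n => ∑' k : ℕ, markovF n (k + 1)) atTop (𝓝 0) := by
  have h := (summable_succ_cube_mul_half_pow.tendsto_atTop_zero.const_mul 5).mul_const
    (Real.pi ^ 4 / 90)
  rw [mul_zero, zero_mul] at h
  exact squeeze_zero_norm (fun n => tsum_of_norm_bounded
    (hasSum_one_div_succ_pow_four.mul_left _)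
    fun k => abs_markovF_le n (one_le_natCast_add_one k)) h

theorem tendsto_markovT (n : ℕ) : Tendsto (fun k : ℕ => markovT n (k + 1)) atTop (𝓝 0) := by
  have h0 : Tendsto (fun k : ℕ => 1 / ((k : ℝ) + 1) ^ 2) atTop (𝓝 0) := by
    have := (tendsto_one_div_add_atTop_nhds_zero_nat (𝕜 := ℝ)).pow 2
    simpa using this
  have h := h0.const_mul (31 * (((n : ℝ) + 1) ^ 3 * (1 / 2) ^ n))
  rw [mul_zero] at h
  exact squeeze_zero_norm (fun k => abs_markovT_le n (one_le_natCast_add_one k)) h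

theorem tsum_markovF_sub_succ (n : ℕ) :
    ∑' k : ℕ, markovF n (k + 1) - ∑' k : ℕ, markovF (n + 1) (k + 1) = markovT n 1 := by
  have h := ((summable_markovF n).hasSum.sub (summable_markovF (n + 1)).hasSum).tendsto_sum_nat
  have hs (K : ℕ) : ∑ k ∈ range K, (markovF n (k + 1) - markovF (n + 1) (k + 1)) =
      markovT n 1 - markovT n (K + 1) := by
    induction K with
    | zero => simp
    | succ K ih =>
      rw [sum_range_succ, ih, markovF_sub_markovF_succ n (by positivity)]
      push_cast
      ring
  have h' := (tendsto_markovT n).const_sub (markovT n 1)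
  simp only [hs] at h
  rw [sub_zero] at h'
  exact tendsto_nhds_unique h h'

theorem tsum_markovF_zero : ∑' k : ℕ, markovF 0 (k + 1) = -Real.pi ^ 4 / 30 := by
  have h (k : ℕ) : markovF 0 (k + 1) = -3 * (1 / ((k : ℝ) + 1) ^ 4) := by
    have : (k : ℝ) + 1 ≠ 0 := by positivity
    simp [markovF, markovCoeff, shiftedHarmonic, risingFactorial]
    field_simp
    ring
  simp only [h]
  rw [(hasSum_one_div_succ_pow_four.mul_left _).tsum_eq]
  ring

theorem hasSum_markovT_one : HasSum (fun n => markovT n 1) (-Real.pi ^ 4 / 30) := by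
  have hsum : Summable fun n => markovT n 1 :=
    Summable.of_norm_bounded ((summable_succ_cube_mul_half_pow.mul_left 31).mul_right _)
      fun n => abs_markovT_le n le_rfl
  have hs (N : ℕ) : ∑ n ∈ range N, markovT n 1 =
      -Real.pi ^ 4 / 30 - ∑' k : ℕ, markovF N (k + 1) := by
    rw [← tsum_markovF_zero, ← sum_range_sub' fun n => ∑' k : ℕ, markovF n (k + 1)]
    exact sum_congr rfl fun n _ => (tsum_markovF_sub_succ n).symm
  rw [hsum.hasSum_iff_tendsto_nat]
  simp only [hs]
  simpa using tendsto_tsum_markovF.const_sub (-Real.pi ^ 4 / 30)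

theorem summand_eq_markovT (n : ℕ) :
    (-1 / 4 : ℝ) ^ (n + 1) * risingFactorial 1 (n + 1) / risingFactorial (1 / 2) (n + 1) *
      (genHarmonic 1 (n + 1) / ((n : ℝ) + 1) ^ 3 - 3 / (10 * ((n : ℝ) + 1) ^ 4)) =
    1 / 10 * markovT n 1 := by
  have hH : shiftedHarmonic 1 (n + 1) = genHarmonic 1 (n + 1) :=
    sum_congr rfl fun _ _ => by rw [pow_one, add_comm]
  have hf : (n.factorial : ℝ) ≠ 0 := by exact_mod_cast n.factorial_ne_zero
  have hf2 : ((2 * n).factorial : ℝ) ≠ 0 := by exact_mod_cast (2 * n).factorial_ne_zero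
  have hhalf : risingFactorial (1 / 2) (n + 1) =
      (2 * n).factorial * (n + 1 / 2) / (4 ^ n * n.factorial) := by
    rw [risingFactorial_succ, ← risingFactorial_half_mul]
    field_simp
    ring
  have h4 : (-1 / 4 : ℝ) ^ (n + 1) = -(-1) ^ n / (4 * 4 ^ n) := by
    rw [div_pow, pow_succ, pow_succ]; ring
  rw [markovT, hH, hhalf, risingFactorial_one, Nat.factorial_succ, markovCoeff, h4]
  generalize genHarmonic 1 (n + 1) = H
  have hn : (n : ℝ) + 1 ≠ 0 := by positivity
  have hn2 : 2 * (n : ℝ) + 1 ≠ 0 := by positivity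
  push_cast
  field_simp
  ring

/-- `∑_{n≥1} (−1/4)^n (1)ₙ/(1/2)ₙ (Hₙ/n³ − 3/(10n⁴)) = −π⁴/300`. -/
theorem harmonic_pi4_series :
    ∑' n : ℕ, ((-1 / 4 : ℝ) ^ (n + 1) * risingFactorial 1 (n + 1) /
        risingFactorial (1 / 2) (n + 1) *
        (genHarmonic 1 (n + 1) / ((n : ℝ) + 1) ^ 3 - 3 / (10 * ((n : ℝ) + 1) ^ 4)))
      = -Real.pi ^ 4 / 300 := by
  simp only [summand_eq_markovT]
  rw [(hasSum_markovT_one.mul_left _).tsum_eq]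
  ring
end

section
/- The series identity ∑_{n≥1} (−1/4)^n · (1)_n / ((1/2)_n) · ( H_{2n}/n³ + 6/(5 n⁴) ) = −π⁴/75 holds. -/
open Filter Topology Nat

namespace AperyWZ

/-- The hypergeometric weight `k!² m! / (m+2k+1)!`. -/
noncomputable def weight (k m : ℕ) : ℝ :=
  (k ! : ℝ) ^ 2 * m ! / (m + 2 * k + 1)!

/-- The `m`-derivative of the summand `2 (-1)^k k!² m! / ((m+2k+1)! (m+k+1)²)`. -/
noncomputable def summand (k m : ℕ) : ℝ :=
  (-1) ^ k * 2 * weight k m / ((m : ℝ) + k + 1) ^ 2 *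
    (genHarmonic 1 m - genHarmonic 1 (m + 2 * k + 1) - 2 / ((m : ℝ) + k + 1))

/-- The `m`-derivative of `(-1)^k k!² m! / ((m+2k+2)! (k+1))`. -/
noncomputable def mate (k m : ℕ) : ℝ :=
  (-1) ^ k * weight k m / (((m : ℝ) + 2 * k + 2) * (k + 1)) *
    (genHarmonic 1 m - genHarmonic 1 (m + 2 * k + 2))

lemma genHarmonic_one_succ (n : ℕ) :
    genHarmonic 1 (n + 1) = genHarmonic 1 n + 1 / ((n : ℝ) + 1) := by
  simp [genHarmonic, Finset.sum_range_succ]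

lemma weight_pos (k m : ℕ) : 0 < weight k m := by
  unfold weight; positivity

lemma weight_succ_left (k m : ℕ) :
    weight (k + 1) m =
      weight k m * ((k : ℝ) + 1) ^ 2 / (((m : ℝ) + 2 * k + 2) * (m + 2 * k + 3)) := by
  have h : (m + 2 * (k + 1) + 1)! = (m + 2 * k + 3) * ((m + 2 * k + 2) * (m + 2 * k + 1)!) := by
    rw [← Nat.factorial_succ, ← Nat.factorial_succ]; congr 1
  unfold weight
  rw [h, Nat.factorial_succ k]
  push_cast
  field_simp

lemma weight_succ_right (k m : ℕ) :
    weight k (m + 1) = weight k m * ((m : ℝ) + 1) / ((m : ℝ) + 2 * k + 2) := by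
  have h : (m + 1 + 2 * k + 1)! = (m + 2 * k + 2) * (m + 2 * k + 1)! := by
    rw [← Nat.factorial_succ]; congr 1; ring
  unfold weight
  rw [h, Nat.factorial_succ m]
  push_cast
  field_simp

lemma weight_le (k m : ℕ) : weight k m ≤ 1 / (2 * (k : ℝ) + 1) := by
  have h1 : (2 * k + 1)! * m ! ≤ (m + 2 * k + 1)! := by
    rw [show m + 2 * k + 1 = (2 * k + 1) + m by ring]
    exact Nat.le_of_dvd (Nat.factorial_pos _) (Nat.factorial_mul_factorial_dvd_factorial_add _ _)
  have h2 : k ! * k ! ≤ (2 * k)! := by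
    rw [two_mul]
    exact Nat.le_of_dvd (Nat.factorial_pos _) (Nat.factorial_mul_factorial_dvd_factorial_add _ _)
  have h3 : k ! * k ! * m ! * (2 * k + 1) ≤ (m + 2 * k + 1)! := by
    refine le_trans ?_ h1
    rw [Nat.factorial_succ]
    nlinarith [Nat.mul_le_mul_right (m ! * (2 * k + 1)) h2]
  have h4 : (k ! * k ! * m ! * (2 * k + 1) : ℝ) ≤ (m + 2 * k + 1)! := by exact_mod_cast h3
  unfold weight
  rw [div_le_div_iff₀ (by positivity) (by positivity)]
  linarith

lemma genHarmonic_one_diff (m j : ℕ) :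
    0 ≤ genHarmonic 1 (m + j) - genHarmonic 1 m ∧
      genHarmonic 1 (m + j) - genHarmonic 1 m ≤ j := by
  induction j with
  | zero => simp
  | succ j ih =>
    rw [← add_assoc, genHarmonic_one_succ]
    have h0 : 0 ≤ 1 / (((m + j : ℕ) : ℝ) + 1) := by positivity
    have h1 : 1 / (((m + j : ℕ) : ℝ) + 1) ≤ 1 := by
      rw [div_le_one (by positivity)]
      linarith [Nat.cast_nonneg (α := ℝ) (m + j)]
    push_cast at *
    constructor <;> linarith

/-- The Wilf–Zeilberger relation between `summand` and `mate`. -/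
lemma summand_succ_sub (k m : ℕ) :
    summand (k + 1) m - summand k m =
      (mate k (m + 1) + summand k (m + 1)) - (mate k m + summand k m) := by
  unfold summand mate
  rw [weight_succ_left, weight_succ_right,
    show m + 2 * (k + 1) + 1 = m + 2 * k + 1 + 1 + 1 by ring,
    show m + 1 + 2 * k + 2 = m + 2 * k + 1 + 1 + 1 by ring,
    show m + 1 + 2 * k + 1 = m + 2 * k + 1 + 1 by ring,
    show m + 2 * k + 2 = m + 2 * k + 1 + 1 by ring]
  simp only [genHarmonic_one_succ, pow_succ (-1 : ℝ) k]
  push_cast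
  generalize genHarmonic 1 m = a
  generalize genHarmonic 1 (m + 2 * k) = b
  generalize weight k m = w
  generalize (-1 : ℝ) ^ k = s
  have e1 : (m : ℝ) + 2 * k + 1 + 1 = m + 2 * k + 2 := by ring
  have e2 : (m : ℝ) + 2 * k + 2 + 1 = m + 2 * k + 3 := by ring
  have e3 : (m : ℝ) + 1 + 2 * k + 2 = m + 2 * k + 3 := by ring
  have e4 : (m : ℝ) + (k + 1) + 1 = m + k + 2 := by ring
  have e5 : (m : ℝ) + 1 + k + 1 = m + k + 2 := by ring
  rw [e2, e1, e3, e4, e5]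
  field_simp
  ring

lemma abs_summand_le (k m : ℕ) : |summand k m| ≤ 6 / ((m : ℝ) + k + 1) ^ 2 := by
  obtain ⟨h0, h1⟩ := genHarmonic_one_diff m (2 * k + 1)
  rw [← add_assoc] at h0 h1
  push_cast at h1
  have h2 : 0 ≤ 2 / ((m : ℝ) + k + 1) := by positivity
  have h3 : 2 / ((m : ℝ) + k + 1) ≤ 2 := by
    rw [div_le_iff₀ (by positivity)]
    nlinarith [Nat.cast_nonneg (α := ℝ) m, Nat.cast_nonneg (α := ℝ) k]
  have hw := weight_le k m
  have hw0 := weight_pos k m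
  have h4 : |genHarmonic 1 m - genHarmonic 1 (m + 2 * k + 1) - 2 / ((m : ℝ) + k + 1)|
      ≤ 3 * (2 * (k : ℝ) + 1) := by
    rw [abs_le]
    constructor <;> linarith [Nat.cast_nonneg (α := ℝ) k]
  have h5 : weight k m * (2 * (k : ℝ) + 1) ≤ 1 := by
    rwa [le_div_iff₀ (by positivity)] at hw
  unfold summand
  rw [abs_mul, abs_div, abs_mul, abs_mul, abs_pow, abs_neg, abs_one, one_pow, one_mul,
    abs_of_pos hw0, abs_two, abs_of_pos (by positivity : 0 < ((m : ℝ) + k + 1) ^ 2),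
    div_mul_eq_mul_div]
  gcongr
  calc 2 * weight k m * _ ≤ 2 * weight k m * (3 * (2 * (k : ℝ) + 1)) := by gcongr
    _ ≤ 6 := by linarith

lemma abs_mate_le (k m : ℕ) :
    |mate k m| ≤ 2 / ((2 * (k : ℝ) + 1) * (m + 2 * k + 2)) := by
  obtain ⟨h0, h1⟩ := genHarmonic_one_diff m (2 * k + 2)
  rw [← add_assoc] at h0 h1
  push_cast at h1
  have hw := weight_le k m
  have hw0 := weight_pos k m
  have h4 : |genHarmonic 1 m - genHarmonic 1 (m + 2 * k + 2)| ≤ 2 * (k : ℝ) + 2 := by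
    rw [abs_le]
    constructor <;> linarith [Nat.cast_nonneg (α := ℝ) k]
  unfold mate
  rw [abs_mul, abs_div, abs_mul, abs_pow, abs_neg, abs_one, one_pow, one_mul,
    abs_of_pos hw0, abs_of_pos (by positivity : 0 < ((m : ℝ) + 2 * k + 2) * (k + 1))]
  calc _ ≤ 1 / (2 * (k : ℝ) + 1) / (((m : ℝ) + 2 * k + 2) * (k + 1)) * (2 * (k : ℝ) + 2) := by
        gcongr
    _ = _ := by field_simp

lemma summable_inv_succ_sq (c : ℝ) : Summable fun m : ℕ => c / ((m : ℝ) + 1) ^ 2 := by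
  have h := (summable_nat_add_iff 1).2 (Real.summable_one_div_nat_pow.2 one_lt_two)
  simpa [div_eq_mul_inv] using h.mul_left c

lemma abs_summand_le_right (k m : ℕ) : |summand k m| ≤ 6 / ((m : ℝ) + 1) ^ 2 :=
  (abs_summand_le k m).trans (by gcongr; linarith [Nat.cast_nonneg (α := ℝ) k])

lemma abs_summand_le_left (k m : ℕ) : |summand k m| ≤ 6 / ((k : ℝ) + 1) ^ 2 :=
  (abs_summand_le k m).trans (by gcongr; linarith [Nat.cast_nonneg (α := ℝ) m])

lemma summable_summand (k : ℕ) : Summable (summand k) :=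
  Summable.of_norm_bounded (summable_inv_succ_sq 6) (abs_summand_le_right k)

lemma tendsto_mate (k : ℕ) : Tendsto (mate k) atTop (𝓝 0) := by
  refine squeeze_zero_norm (a := fun m : ℕ => 2 * (1 / ((m : ℝ) + 1))) (fun m => ?_) ?_
  · refine (abs_mate_le k m).trans ?_
    rw [mul_one_div]
    gcongr
    nlinarith [Nat.cast_nonneg (α := ℝ) m, Nat.cast_nonneg (α := ℝ) k,
      mul_nonneg (Nat.cast_nonneg (α := ℝ) m) (Nat.cast_nonneg (α := ℝ) k)]
  · simpa using (tendsto_one_div_add_atTop_nhds_zero_nat (𝕜 := ℝ)).const_mul 2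

lemma tsum_summand_succ (k : ℕ) :
    ∑' m, summand (k + 1) m - ∑' m, summand k m = -(mate k 0 + summand k 0) := by
  have h := ((summable_summand (k + 1)).hasSum.sub (summable_summand k).hasSum).tendsto_sum_nat
  refine tendsto_nhds_unique h ?_
  simp_rw [summand_succ_sub, Finset.sum_range_sub (fun m => mate k m + summand k m)]
  simpa using ((tendsto_mate k).add (summable_summand k).tendsto_atTop_zero).sub_const
    (mate k 0 + summand k 0)

lemma tendsto_tsum_summand : Tendsto (fun k => ∑' m, summand k m) atTop (𝓝 0) := by
  have h := tendsto_tsum_of_dominated_convergence (𝓕 := atTop) (f := summand)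
    (g := fun _ => (0 : ℝ)) (summable_inv_succ_sq 6)
    (fun m => squeeze_zero_norm (fun k => abs_summand_le_left k m)
      (summable_inv_succ_sq 6).tendsto_atTop_zero)
    (Eventually.of_forall abs_summand_le_right)
  simpa using h

lemma tsum_summand_zero : ∑' m, summand 0 m = -Real.pi ^ 4 / 15 := by
  have h := (hasSum_nat_add_iff' 1).2 hasSum_zeta_four
  have h2 := (h.mul_left (-6)).tsum_eq
  have : (fun m => summand 0 m) = fun m : ℕ => -6 * (1 / ((m + 1 : ℕ) : ℝ) ^ 4) := by
    ext m
    have hw : weight 0 m = 1 / ((m : ℝ) + 1) := by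
      unfold weight
      simp only [mul_zero, add_zero, Nat.factorial_succ]
      push_cast
      simp only [Nat.factorial_zero]
      field_simp
      simp
    unfold summand
    rw [hw, mul_zero, add_zero, genHarmonic_one_succ]
    push_cast
    field_simp
    ring
  rw [this, h2]
  simp
  ring

lemma hasSum_mate_add_summand :
    HasSum (fun k => mate k 0 + summand k 0) (-Real.pi ^ 4 / 15) := by
  have hs : Summable fun k => mate k 0 + summand k 0 := by
    refine Summable.add ?_ ?_
    · refine Summable.of_norm_bounded (summable_inv_succ_sq 2) fun k => ?_
      refine (abs_mate_le k 0).trans ?_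
      gcongr
      push_cast
      nlinarith [Nat.cast_nonneg (α := ℝ) k]
    · exact Summable.of_norm_bounded (summable_inv_succ_sq 6) fun k => abs_summand_le_left k 0
  rw [hs.hasSum_iff_tendsto_nat]
  have h (k : ℕ) : mate k 0 + summand k 0 = ∑' m, summand k m - ∑' m, summand (k + 1) m := by
    linarith [tsum_summand_succ k]
  simp_rw [h, Finset.sum_range_sub' (fun k => ∑' m, summand k m), tsum_summand_zero]
  simpa using tendsto_tsum_summand.const_sub (-Real.pi ^ 4 / 15)

lemma risingFactorial_one (n : ℕ) : risingFactorial 1 n = n ! := by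
  induction n with
  | zero => simp [risingFactorial]
  | succ n ih =>
    rw [risingFactorial, Finset.prod_range_succ, ← risingFactorial, ih, Nat.factorial_succ]
    push_cast
    ring

lemma risingFactorial_half (n : ℕ) :
    risingFactorial (1 / 2) n = (2 * n)! / (4 ^ n * n !) := by
  induction n with
  | zero => simp [risingFactorial]
  | succ n ih =>
    rw [risingFactorial, Finset.prod_range_succ, ← risingFactorial, ih,
      show 2 * (n + 1) = 2 * n + 1 + 1 by ring]
    simp only [Nat.factorial_succ]
    push_cast
    field_simp
    ring

lemma mate_add_summand_zero (n : ℕ) :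
    (-1 / 4 : ℝ) ^ (n + 1) * risingFactorial 1 (n + 1) / risingFactorial (1 / 2) (n + 1) *
        (genHarmonic 1 (2 * (n + 1)) / ((n : ℝ) + 1) ^ 3 + 6 / (5 * ((n : ℝ) + 1) ^ 4)) =
      1 / 5 * (mate n 0 + summand n 0) := by
  rw [risingFactorial_one, risingFactorial_half]
  unfold mate summand weight
  have h0 : genHarmonic 1 0 = 0 := by simp [genHarmonic]
  rw [h0, show 2 * (n + 1) = 2 * n + 1 + 1 by ring, show 0 + 2 * n + 2 = 2 * n + 1 + 1 by ring,
    show 0 + 2 * n + 1 = 2 * n + 1 by ring, genHarmonic_one_succ (2 * n + 1),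
    Nat.factorial_succ (2 * n + 1), Nat.factorial_succ n, div_pow, pow_succ (-1 : ℝ) n]
  push_cast
  generalize genHarmonic 1 (2 * n + 1) = b
  generalize (-1 : ℝ) ^ n = s
  simp only [Nat.factorial_zero, Nat.cast_one, zero_add, mul_one]
  have e1 : 2 * (n : ℝ) + 1 + 1 = 2 * (n + 1) := by ring
  have e2 : 2 * (n : ℝ) + 2 = 2 * (n + 1) := by ring
  rw [e1, e2]
  field_simp
  ring

end AperyWZ

/-- `∑_{n≥1} (−1/4)^n (1)ₙ/(1/2)ₙ (H_{2n}/n³ + 6/(5n⁴)) = −π⁴/75`. -/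
theorem harmonic2n_pi4_series :
    ∑' n : ℕ, ((-1 / 4 : ℝ) ^ (n + 1) * risingFactorial 1 (n + 1) /
        risingFactorial (1 / 2) (n + 1) *
        (genHarmonic 1 (2 * (n + 1)) / ((n : ℝ) + 1) ^ 3 + 6 / (5 * ((n : ℝ) + 1) ^ 4)))
      = -Real.pi ^ 4 / 75 := by
  simp_rw [AperyWZ.mate_add_summand_zero]
  rw [(AperyWZ.hasSum_mate_add_summand.mul_left (1 / 5)).tsum_eq]
  ring
end

section
/- The series identity ∑_{n≥1} (−1/4)^n · (1)_n / ((1/2)_n) · [ (10n−3) H_n^{(2)} / (3 n² (2n−1)) − (18n−7)/(3 n⁴ (2n−1)) ] = π⁴/135 holds. -/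
open Finset Filter Topology

namespace HarmonicSeries

/-- The signed weight `∏_{i=1}^n (-i²)`. -/
noncomputable def weight (n : ℕ) : ℝ := (-1) ^ n * (n.factorial : ℝ) ^ 2

/-- The `x²`-coefficient of `∏_{i=1}^n (x² - i²) / (u² - i²) / (u² - x²)` at `u = n + k + 1`. -/
noncomputable def kernel (n k : ℕ) : ℝ :=
  weight n * ((k.factorial : ℝ) / ((2 * n + k + 1).factorial : ℝ)) *
    (1 / ((n : ℝ) + k + 1) ^ 2 - genHarmonic 2 n) / ((n : ℝ) + k + 1)

/-- The tail sum `∑_{u ≥ n + k + 2} ∏_{i=1}^{n+1} 1 / (u² - i²)` in closed form. -/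
noncomputable def tail (n k : ℕ) : ℝ :=
  (k.factorial : ℝ) / ((2 * n + k + 2).factorial : ℝ) *
    (((k : ℝ) + 1) / (2 * n + 1) + 1 / 2)

theorem genHarmonic_two_succ (n : ℕ) :
    genHarmonic 2 (n + 1) = genHarmonic 2 n + 1 / ((n : ℝ) + 1) ^ 2 := by
  simp [genHarmonic, sum_range_succ]

theorem weight_succ (n : ℕ) : weight (n + 1) = -((n : ℝ) + 1) ^ 2 * weight n := by
  simp only [weight, Nat.factorial_succ]
  push_cast
  ring

theorem kernel_succ_right_sub_kernel_succ_left (n k : ℕ) :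
    kernel n (k + 1) - kernel (n + 1) k =
      -(weight n * genHarmonic 2 n) * (tail n k - tail n (k + 1)) := by
  have e₁ : 2 * n + (k + 1) + 1 = 2 * n + k + 2 := by ring
  have e₂ : 2 * (n + 1) + k + 1 = (2 * n + k + 2) + 1 := by ring
  have e₃ : 2 * n + (k + 1) + 2 = (2 * n + k + 2) + 1 := by ring
  have hb : ((2 * n + k + 2).factorial : ℝ) ≠ 0 := by positivity
  have h₁ : (n : ℝ) + k + 2 ≠ 0 := by positivity
  have h₂ : (2 * n : ℝ) + k + 3 ≠ 0 := by positivity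
  have h₃ : (2 * n : ℝ) + 1 ≠ 0 := by positivity
  have h₄ : (n : ℝ) + 1 ≠ 0 := by positivity
  simp only [kernel, tail, e₁, e₂, e₃, weight_succ, genHarmonic_two_succ,
    Nat.factorial_succ (2 * n + k + 2), Nat.factorial_succ k]
  push_cast
  rw [show (n : ℝ) + (k + 1) + 1 = n + k + 2 by ring,
    show (n : ℝ) + 1 + k + 1 = n + k + 2 by ring,
    show (2 * n : ℝ) + k + 2 + 1 = 2 * n + k + 3 by ring]
  field_simp
  ring

theorem genHarmonic_two_nonneg (n : ℕ) : 0 ≤ genHarmonic 2 n :=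
  sum_nonneg fun _ _ => by positivity

theorem genHarmonic_two_le (n : ℕ) : genHarmonic 2 n ≤ n := by
  induction n with
  | zero => simp [genHarmonic]
  | succ n ih =>
    have : 1 / ((n : ℝ) + 1) ^ 2 ≤ 1 := by
      rw [div_le_one (by positivity)]
      exact one_le_pow₀ (by linarith [(n.cast_nonneg : (0 : ℝ) ≤ n)])
    rw [genHarmonic_two_succ]
    push_cast
    linarith

theorem two_pow_mul_factorial_sq_le (n : ℕ) :
    2 ^ n * n.factorial ^ 2 ≤ (2 * n).factorial := by
  induction n with
  | zero => simp
  | succ n ih =>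
    rw [show 2 * (n + 1) = 2 * n + 1 + 1 by ring, Nat.factorial_succ, Nat.factorial_succ,
      Nat.factorial_succ, pow_succ]
    calc 2 ^ n * 2 * ((n + 1) * n.factorial) ^ 2
        = (2 * (n + 1) ^ 2) * (2 ^ n * n.factorial ^ 2) := by ring
      _ ≤ ((2 * n + 1 + 1) * (2 * n + 1)) * (2 * n).factorial :=
        Nat.mul_le_mul (by nlinarith) ih
      _ = _ := by ring

theorem abs_weight (n : ℕ) : |weight n| = (n.factorial : ℝ) ^ 2 := by
  simp [weight, abs_mul]

theorem abs_weight_div_le (n : ℕ) : |weight n| / (2 * n).factorial ≤ (1 / 2 : ℝ) ^ n := by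
  have h : (2 : ℝ) ^ n * (n.factorial : ℝ) ^ 2 ≤ (2 * n).factorial := by
    exact_mod_cast two_pow_mul_factorial_sq_le n
  rw [abs_weight, div_le_iff₀ (by positivity), one_div, inv_pow, inv_mul_eq_div,
    le_div_iff₀ (by positivity)]
  linarith

theorem factorial_div_le (n k : ℕ) :
    (k.factorial : ℝ) / (2 * n + k + 1).factorial ≤ 1 / (2 * n).factorial / ((k : ℝ) + 1) := by
  have h : ((k : ℝ) + 1) * k.factorial * (2 * n).factorial ≤ (2 * n + k + 1).factorial := by
    have := Nat.le_of_dvd (Nat.factorial_pos _)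
      (Nat.factorial_mul_factorial_dvd_factorial_add (2 * n) (k + 1))
    rw [Nat.factorial_succ] at this
    have h' : (k + 1) * k.factorial * (2 * n).factorial ≤ (2 * n + k + 1).factorial := by
      rw [mul_comm]
      exact this
    exact_mod_cast h'
  rw [div_div, div_le_div_iff₀ (by positivity) (by positivity)]
  linarith

theorem abs_kernel_le (n k : ℕ) :
    |kernel n k| ≤ (n + 1) * (1 / 2 : ℝ) ^ n * (1 / ((k : ℝ) + 1) ^ 2) := by
  have hn : (0 : ℝ) ≤ n := n.cast_nonneg
  have hk : (0 : ℝ) ≤ k := k.cast_nonneg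
  have hH : |1 / ((n : ℝ) + k + 1) ^ 2 - genHarmonic 2 n| ≤ (n : ℝ) + 1 := by
    have h₁ : 1 / ((n : ℝ) + k + 1) ^ 2 ≤ 1 := by
      rw [div_le_one (by positivity)]
      exact one_le_pow₀ (by linarith)
    have h₂ : 0 ≤ 1 / ((n : ℝ) + k + 1) ^ 2 := by positivity
    have := genHarmonic_two_nonneg n
    have := genHarmonic_two_le n
    rw [abs_le]
    constructor <;> linarith
  have hq : |(k.factorial : ℝ) / (2 * n + k + 1).factorial| ≤
      1 / (2 * n).factorial / ((k : ℝ) + 1) := by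
    rw [abs_of_nonneg (by positivity)]
    exact factorial_div_le n k
  have hd : ((k : ℝ) + 1) ≤ |(n : ℝ) + k + 1| := by
    rw [abs_of_nonneg (by positivity)]
    linarith
  rw [kernel, abs_div, abs_mul, abs_mul]
  calc |weight n| * |(k.factorial : ℝ) / (2 * n + k + 1).factorial| *
        |1 / ((n : ℝ) + k + 1) ^ 2 - genHarmonic 2 n| / |(n : ℝ) + k + 1|
      ≤ |weight n| * (1 / (2 * n).factorial / ((k : ℝ) + 1)) * (n + 1) / ((k : ℝ) + 1) := by
        gcongr
    _ = (n + 1) * (|weight n| / (2 * n).factorial) * (1 / ((k : ℝ) + 1) ^ 2) := by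
        field_simp
    _ ≤ _ := by
        gcongr
        exact abs_weight_div_le n

theorem summable_one_div_succ_sq : Summable fun k : ℕ => 1 / ((k : ℝ) + 1) ^ 2 := by
  have := (summable_nat_add_iff 1).2 (Real.summable_one_div_nat_pow.2 (le_refl 2))
  simpa using this

theorem summable_kernel (n : ℕ) : Summable (kernel n) :=
  .of_norm_bounded (summable_one_div_succ_sq.mul_left _) fun k => abs_kernel_le n k

theorem tendsto_succ_mul_half_pow :
    Tendsto (fun n : ℕ => ((n : ℝ) + 1) * (1 / 2 : ℝ) ^ n) atTop (𝓝 0) := by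
  have h₁ := tendsto_self_mul_const_pow_of_lt_one (r := (1 / 2 : ℝ)) (by norm_num) (by norm_num)
  have h₂ := tendsto_pow_atTop_nhds_zero_of_lt_one (r := (1 / 2 : ℝ)) (by norm_num) (by norm_num)
  simpa [add_mul] using h₁.add h₂

theorem tendsto_tsum_kernel : Tendsto (fun n => ∑' k, kernel n k) atTop (𝓝 0) := by
  have hlim := tendsto_succ_mul_half_pow.mul_const (∑' k : ℕ, 1 / ((k : ℝ) + 1) ^ 2)
  rw [zero_mul] at hlim
  refine squeeze_zero_norm (fun n => ?_) hlim
  exact tsum_of_norm_bounded (summable_one_div_succ_sq.hasSum.mul_left _)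
    fun k => abs_kernel_le n k

theorem tendsto_tail (n : ℕ) : Tendsto (tail n) atTop (𝓝 0) := by
  refine squeeze_zero (fun k => by unfold tail; positivity) (fun k => ?_)
    (tendsto_one_div_add_atTop_nhds_zero_nat (𝕜 := ℝ))
  have hk : (0 : ℝ) ≤ k := k.cast_nonneg
  have hf : ((k : ℝ) + 2) * (k + 1) * k.factorial ≤ (2 * n + k + 2).factorial := by
    have h := Nat.factorial_le (show k + 2 ≤ 2 * n + k + 2 by omega)
    rw [Nat.factorial_succ, Nat.factorial_succ, ← mul_assoc] at h
    exact_mod_cast h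
  have hb : ((k : ℝ) + 1) / (2 * n + 1) + 1 / 2 ≤ k + 2 := by
    have : ((k : ℝ) + 1) / (2 * n + 1) ≤ k + 1 :=
      div_le_self (by positivity) (by linarith [(n.cast_nonneg : (0 : ℝ) ≤ n)])
    linarith
  calc tail n k ≤ (k.factorial : ℝ) / (((k : ℝ) + 2) * (k + 1) * k.factorial) * (k + 2) := by
        unfold tail
        gcongr
    _ = 1 / ((k : ℝ) + 1) := by field_simp

theorem tsum_kernel_sub_tsum_kernel_succ (n : ℕ) :
    ∑' k, kernel n k - ∑' k, kernel (n + 1) k =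
      kernel n 0 - weight n * genHarmonic 2 n * tail n 0 := by
  have hs := (summable_nat_add_iff 1).2 (summable_kernel n)
  have hdiff := hs.hasSum.sub (summable_kernel (n + 1)).hasSum
  simp only [kernel_succ_right_sub_kernel_succ_left] at hdiff
  have hlim : Tendsto (fun m => ∑ k ∈ range m,
      -(weight n * genHarmonic 2 n) * (tail n k - tail n (k + 1))) atTop
      (𝓝 (-(weight n * genHarmonic 2 n) * (tail n 0 - 0))) := by
    simp only [← mul_sum, sum_range_sub']
    exact ((tendsto_tail n).const_sub _).const_mul _
  have := tendsto_nhds_unique hdiff.tendsto_sum_nat hlim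
  rw [(summable_kernel n).tsum_eq_zero_add]
  linarith

theorem tsum_kernel_zero : ∑' k, kernel 0 k = Real.pi ^ 4 / 90 := by
  have h := (hasSum_nat_add_iff' 1).2 hasSum_zeta_four
  simp only [range_one, sum_singleton, Nat.cast_zero, ne_eq, OfNat.ofNat_ne_zero,
    not_false_eq_true, zero_pow, div_zero, sub_zero] at h
  rw [← h.tsum_eq]
  refine tsum_congr fun k => ?_
  simp only [kernel, weight, genHarmonic, mul_zero, zero_add, Nat.factorial_succ k]
  have : (k.factorial : ℝ) ≠ 0 := by positivity
  push_cast
  simp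
  field_simp

theorem abs_kernel_sub_tail_le (n : ℕ) :
    |kernel n 0 - weight n * genHarmonic 2 n * tail n 0| ≤ 3 * ((n + 1) * (1 / 2 : ℝ) ^ n) := by
  have hn : (0 : ℝ) ≤ n := n.cast_nonneg
  have h₁ := abs_kernel_le n 0
  have hH := genHarmonic_two_nonneg n
  have h₂ : |weight n * genHarmonic 2 n * tail n 0| ≤ 2 * ((n + 1) * (1 / 2 : ℝ) ^ n) := by
    have ht : tail n 0 ≤ 2 / (2 * n).factorial := by
      have hf : ((2 * n).factorial : ℝ) ≤ (2 * n + 0 + 2).factorial := by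
        exact_mod_cast Nat.factorial_le (by omega)
      have hb : (((0 : ℕ) : ℝ) + 1) / (2 * n + 1) + 1 / 2 ≤ 2 := by
        have : (((0 : ℕ) : ℝ) + 1) / (2 * n + 1) ≤ ((0 : ℕ) : ℝ) + 1 :=
          div_le_self (by positivity) (by linarith)
        push_cast at this ⊢
        linarith
      calc tail n 0 ≤ ((0 : ℕ).factorial : ℝ) / (2 * n).factorial * 2 := by
            unfold tail
            gcongr
        _ = 2 / (2 * n).factorial := by
            simp
            ring
    have ht₀ : 0 ≤ tail n 0 := by unfold tail; positivity
    rw [abs_mul, abs_mul, abs_of_nonneg hH, abs_of_nonneg ht₀]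
    calc |weight n| * genHarmonic 2 n * tail n 0
        ≤ |weight n| * (n + 1) * (2 / (2 * n).factorial) := by
          gcongr
          linarith [genHarmonic_two_le n]
      _ = 2 * ((n + 1) * (|weight n| / (2 * n).factorial)) := by ring
      _ ≤ _ := by
          gcongr
          exact abs_weight_div_le n
  have := abs_sub (kernel n 0) (weight n * genHarmonic 2 n * tail n 0)
  norm_num at h₁
  linarith

theorem hasSum_kernel_sub_tail :
    HasSum (fun n => kernel n 0 - weight n * genHarmonic 2 n * tail n 0)
      (Real.pi ^ 4 / 90) := by
  have hgeom : Summable fun n : ℕ => 3 * (((n : ℝ) + 1) * (1 / 2 : ℝ) ^ n) := by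
    have h₁ := summable_pow_mul_geometric_of_norm_lt_one 1 (r := (1 / 2 : ℝ)) (by norm_num)
    have h₂ := summable_geometric_of_lt_one (r := (1 / 2 : ℝ)) (by norm_num) (by norm_num)
    simpa [add_mul] using (h₁.add h₂).mul_left 3
  have hs : Summable fun n => kernel n 0 - weight n * genHarmonic 2 n * tail n 0 :=
    .of_norm_bounded hgeom abs_kernel_sub_tail_le
  refine (hs.hasSum_iff_tendsto_nat).2 ?_
  simp only [← tsum_kernel_sub_tsum_kernel_succ, sum_range_sub', tsum_kernel_zero]
  simpa using tendsto_tsum_kernel.const_sub (Real.pi ^ 4 / 90)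

theorem risingFactorial_one (n : ℕ) : risingFactorial 1 n = n.factorial := by
  induction n with
  | zero => simp [risingFactorial]
  | succ n ih =>
    rw [risingFactorial, prod_range_succ, ← risingFactorial, ih, Nat.factorial_succ]
    push_cast
    ring

theorem risingFactorial_half (n : ℕ) :
    risingFactorial (1 / 2) n = (2 * n).factorial / (4 ^ n * n.factorial) := by
  induction n with
  | zero => simp [risingFactorial]
  | succ n ih =>
    rw [risingFactorial, prod_range_succ, ← risingFactorial, ih,
      show 2 * (n + 1) = 2 * n + 1 + 1 by ring, Nat.factorial_succ, Nat.factorial_succ,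
      Nat.factorial_succ]
    have : (n.factorial : ℝ) ≠ 0 := by positivity
    push_cast
    field_simp
    ring

theorem neg_quarter_pow_mul_risingFactorial_div (n : ℕ) :
    (-1 / 4 : ℝ) ^ n * risingFactorial 1 n / risingFactorial (1 / 2) n =
      weight n / (2 * n).factorial := by
  rw [risingFactorial_one, risingFactorial_half, weight, div_pow]
  have : (n.factorial : ℝ) ≠ 0 := by positivity
  field_simp

end HarmonicSeries

/-- `∑_{n≥1} (−1/4)^n (1)ₙ/(1/2)ₙ [ (10n−3)H_n^{(2)}/(3n²(2n−1)) − (18n−7)/(3n⁴(2n−1)) ]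
    = π⁴/135`. -/
theorem harmonic2_pi4_135_series :
    ∑' n : ℕ, ((-1 / 4 : ℝ) ^ (n + 1) * risingFactorial 1 (n + 1) /
        risingFactorial (1 / 2) (n + 1) *
        ((10 * ((n : ℝ) + 1) - 3) * genHarmonic 2 (n + 1) /
            (3 * ((n : ℝ) + 1) ^ 2 * (2 * ((n : ℝ) + 1) - 1)) -
          (18 * ((n : ℝ) + 1) - 7) / (3 * ((n : ℝ) + 1) ^ 4 * (2 * ((n : ℝ) + 1) - 1))))
      = Real.pi ^ 4 / 135 := by
  rw [show Real.pi ^ 4 / 135 = 2 / 3 * (Real.pi ^ 4 / 90) by ring,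
    ← (HarmonicSeries.hasSum_kernel_sub_tail.mul_left (2 / 3)).tsum_eq]
  refine tsum_congr fun n => ?_
  rw [HarmonicSeries.neg_quarter_pow_mul_risingFactorial_div, HarmonicSeries.weight_succ,
    HarmonicSeries.genHarmonic_two_succ, HarmonicSeries.kernel, HarmonicSeries.tail,
    show 2 * (n + 1) = 2 * n + 1 + 1 by ring, show 2 * n + 0 + 2 = 2 * n + 1 + 1 by ring,
    show 2 * n + 0 + 1 = 2 * n + 1 by ring, Nat.factorial_succ (2 * n + 1)]
  have h₁ : ((2 * n + 1).factorial : ℝ) ≠ 0 := by positivity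
  have h₂ : (2 * n : ℝ) + 1 ≠ 0 := by positivity
  have h₃ : (n : ℝ) + 1 ≠ 0 := by positivity
  push_cast
  rw [Nat.factorial_zero, show (2 : ℝ) * (n + 1) - 1 = 2 * n + 1 by ring,
    show (2 : ℝ) * n + 1 + 1 = 2 * (n + 1) by ring, add_zero]
  push_cast
  field_simp
  ring
end

section
/- The series identity ∑_{n≥1} (−1/4)^n · (1)_n / ((1/2)_n) · [ (10n−3) H_n^{(3)} / (3 n² (2n−1)) − (38n−17)/(3 n^5 (2n−1)) ] = −(16/3) ζ(5) + (2/3) π² ζ(3) holds, where ζ is the Riemann zeta function. -/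
theorem genHarmonic_zero (s : ℕ) : genHarmonic s 0 = 0 := by
  simp [genHarmonic]

theorem genHarmonic_succ (s n : ℕ) :
    genHarmonic s (n + 1) = genHarmonic s n + 1 / ((n : ℝ) + 1) ^ s := by
  simp [genHarmonic, Finset.sum_range_succ]

/-- The hypergeometric factor common to `wzTerm` and `wzMate`, up to a rational function. -/
noncomputable def wzWeight (n k : ℕ) : ℝ :=
  (-1) ^ n * (n.factorial : ℝ) ^ 2 * k.factorial / ((2 * n + 1 + k).factorial : ℝ)

/-- The first member of a Wilf–Zeilberger pair for the series; `wzTerm n k` is a summand at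
`m = n + 1 + k`. -/
noncomputable def wzTerm (n k : ℕ) : ℝ :=
  2 / 3 * wzWeight n k / ((n : ℝ) + 1 + k) *
    (5 / ((n : ℝ) + 1 + k) ^ 3 - 2 * genHarmonic 3 (n + 1 + k) + genHarmonic 3 n +
      2 * (1 / ((n : ℝ) + 1 + k) ^ 2 - genHarmonic 2 n) *
        (1 / ((n : ℝ) + 1 + k) + genHarmonic 1 (2 * n + 1 + k) - genHarmonic 1 k -
          genHarmonic 1 (n + 1 + k) + genHarmonic 1 n - genHarmonic 1 (2 * n)))

/-- The second member of the Wilf–Zeilberger pair. -/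
noncomputable def wzMate (n k : ℕ) : ℝ :=
  2 / 3 * wzWeight n k / ((2 * (n : ℝ) + 2 + k) * (2 * n + 1)) *
    (((n : ℝ) + 3 / 2 + k) * (genHarmonic 3 n - 2 * genHarmonic 3 (n + 1 + k)) +
      genHarmonic 2 n *
        (3 - 1 / (2 * (n : ℝ) + 2) - (2 * (n : ℝ) + 3 + 2 * k) *
          (genHarmonic 1 (2 * n + 1 + k) + 1 / (2 * (n : ℝ) + 2 + k) - genHarmonic 1 k -
            genHarmonic 1 (n + 1 + k) + genHarmonic 1 n - genHarmonic 1 (2 * n) -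
              1 / (2 * (n : ℝ) + 1))))

theorem wzWeight_succ_right (n k : ℕ) :
    wzWeight n (k + 1) = wzWeight n k * ((k : ℝ) + 1) / (2 * (n : ℝ) + 2 + k) := by
  have h : 2 * n + 1 + (k + 1) = (2 * n + 1 + k) + 1 := by ring
  have h₀ : ((2 * n + 1 + k).factorial : ℝ) ≠ 0 := by positivity
  have h₁ : 2 * (n : ℝ) + 2 + k ≠ 0 := by positivity
  have h₂ : 2 * (n : ℝ) + 1 + k + 1 ≠ 0 := by positivity
  rw [wzWeight, wzWeight, h, Nat.factorial_succ, Nat.factorial_succ]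
  push_cast
  field_simp
  ring

theorem wzWeight_succ_left (n k : ℕ) :
    wzWeight (n + 1) k = -wzWeight n k * ((n : ℝ) + 1) ^ 2 /
      ((2 * (n : ℝ) + 2 + k) * (2 * (n : ℝ) + 3 + k)) := by
  have h : 2 * (n + 1) + 1 + k = (2 * n + 1 + k) + 1 + 1 := by ring
  have h₀ : ((2 * n + 1 + k).factorial : ℝ) ≠ 0 := by positivity
  have h₁ : 2 * (n : ℝ) + 2 + k ≠ 0 := by positivity
  have h₂ : 2 * (n : ℝ) + 1 + k + 1 ≠ 0 := by positivity
  have h₃ : 2 * (n : ℝ) + 3 + k ≠ 0 := by positivity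
  have h₄ : 2 * (n : ℝ) + 1 + k + 1 + 1 ≠ 0 := by positivity
  rw [wzWeight, wzWeight, h, Nat.factorial_succ, Nat.factorial_succ (2 * n + 1 + k + 1),
    Nat.factorial_succ (2 * n + 1 + k)]
  push_cast
  field_simp
  ring

/-- The rational-function identity behind `wzTerm_sub_wzTerm`: `x = n`, `y = k`, and `S`, `Q`, `T`
stand for the combinations of harmonic numbers that occur. -/
theorem wz_rational_identity {x y : ℝ} (hx : 0 ≤ x) (hy : 0 ≤ y) (S Q T : ℝ) :
    (y + 1) / (2 * x + 2 + y) / (x + 2 + y) *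
        (3 / (x + 2 + y) ^ 3 + S + 2 * (1 / (x + 2 + y) ^ 2 - Q) *
          (T + 1 / (2 * x + 2 + y) - 1 / (y + 1))) +
      (x + 1) ^ 2 / ((2 * x + 2 + y) * (2 * x + 3 + y)) / (x + 2 + y) *
        (3 / (x + 2 + y) ^ 3 + S + 1 / (x + 1) ^ 3 +
          2 * (1 / (x + 2 + y) ^ 2 - Q - 1 / (x + 1) ^ 2) *
            (T + 1 / (2 * x + 2 + y) + 1 / (2 * x + 3 + y) + 1 / (x + 1) - 1 / (2 * x + 1) -
              1 / (2 * x + 2))) =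
    1 / ((2 * x + 2 + y) * (2 * x + 1)) *
        ((x + 3 / 2 + y) * S + Q * (3 - 1 / (2 * x + 2) - (2 * x + 3 + 2 * y) *
          (T + 1 / (2 * x + 2 + y) - 1 / (2 * x + 1)))) -
      (y + 1) / ((2 * x + 2 + y) * ((2 * x + 3 + y) * (2 * x + 1))) *
        ((x + 5 / 2 + y) * (S - 2 / (x + 2 + y) ^ 3) + Q * (3 - 1 / (2 * x + 2) -
          (2 * x + 5 + 2 * y) * (T + 1 / (2 * x + 2 + y) + 1 / (2 * x + 3 + y) - 1 / (y + 1) -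
            1 / (x + 2 + y) - 1 / (2 * x + 1)))) := by
  have cS : (y + 1) / (2 * x + 2 + y) / (x + 2 + y) +
      (x + 1) ^ 2 / ((2 * x + 2 + y) * (2 * x + 3 + y)) / (x + 2 + y) =
      1 / ((2 * x + 2 + y) * (2 * x + 1)) * (x + 3 / 2 + y) -
        (y + 1) / ((2 * x + 2 + y) * ((2 * x + 3 + y) * (2 * x + 1))) * (x + 5 / 2 + y) := by
    field_simp
    ring
  have cT : (y + 1) / (2 * x + 2 + y) / (x + 2 + y) * (1 / (x + 2 + y) ^ 2) +
      (x + 1) ^ 2 / ((2 * x + 2 + y) * (2 * x + 3 + y)) / (x + 2 + y) *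
        (1 / (x + 2 + y) ^ 2 - 1 / (x + 1) ^ 2) = 0 := by
    field_simp
    ring
  have cQ : (y + 1) / (2 * x + 2 + y) / (x + 2 + y) *
        (2 * (1 / (2 * x + 2 + y) - 1 / (y + 1))) +
      (x + 1) ^ 2 / ((2 * x + 2 + y) * (2 * x + 3 + y)) / (x + 2 + y) *
        (2 * (1 / (2 * x + 2 + y) + 1 / (2 * x + 3 + y) + 1 / (x + 1) - 1 / (2 * x + 1) -
              1 / (2 * x + 2))) =
    (y + 1) / ((2 * x + 2 + y) * ((2 * x + 3 + y) * (2 * x + 1))) *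
        (3 - 1 / (2 * x + 2) -
          (2 * x + 5 + 2 * y) * (1 / (2 * x + 2 + y) + 1 / (2 * x + 3 + y) - 1 / (y + 1) -
            1 / (x + 2 + y) - 1 / (2 * x + 1))) -
      1 / ((2 * x + 2 + y) * (2 * x + 1)) *
        (3 - 1 / (2 * x + 2) - (2 * x + 3 + 2 * y) *
          (1 / (2 * x + 2 + y) - 1 / (2 * x + 1))) := by
    field_simp
    ring
  have c1 : (y + 1) / (2 * x + 2 + y) / (x + 2 + y) *
        (3 / (x + 2 + y) ^ 3 + 2 * (1 / (x + 2 + y) ^ 2) *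
          (1 / (2 * x + 2 + y) - 1 / (y + 1))) +
      (x + 1) ^ 2 / ((2 * x + 2 + y) * (2 * x + 3 + y)) / (x + 2 + y) *
        (3 / (x + 2 + y) ^ 3 + 1 / (x + 1) ^ 3 +
          2 * (1 / (x + 2 + y) ^ 2 - 1 / (x + 1) ^ 2) *
            (1 / (2 * x + 2 + y) + 1 / (2 * x + 3 + y) + 1 / (x + 1) - 1 / (2 * x + 1) -
              1 / (2 * x + 2))) =
      (y + 1) / ((2 * x + 2 + y) * ((2 * x + 3 + y) * (2 * x + 1))) *
        ((x + 5 / 2 + y) * (2 / (x + 2 + y) ^ 3)) := by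
    field_simp
    ring
  linear_combination (S - 2 * Q * T) * cS + 2 * T * cT - Q * cQ + c1

theorem wzTerm_sub_wzTerm (n k : ℕ) :
    wzTerm n (k + 1) - wzTerm (n + 1) k = wzMate n k - wzMate n (k + 1) := by
  have e₁ : n + 1 + (k + 1) = (n + 1 + k) + 1 := by ring
  have e₂ : n + 1 + 1 + k = (n + 1 + k) + 1 := by ring
  have e₃ : 2 * n + 1 + (k + 1) = (2 * n + 1 + k) + 1 := by ring
  have e₄ : 2 * (n + 1) + 1 + k = (2 * n + 1 + k) + 1 + 1 := by ring
  have e₅ : 2 * (n + 1) = 2 * n + 1 + 1 := by ring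
  have key := wz_rational_identity n.cast_nonneg k.cast_nonneg
    (genHarmonic 3 n - 2 * genHarmonic 3 (n + 1 + k)) (genHarmonic 2 n)
    (genHarmonic 1 (2 * n + 1 + k) - genHarmonic 1 k - genHarmonic 1 (n + 1 + k) +
      genHarmonic 1 n - genHarmonic 1 (2 * n))
  simp only [wzTerm, wzMate, e₁, e₂, e₃, e₄, wzWeight_succ_right, wzWeight_succ_left]
  simp only [e₅, genHarmonic_succ _ (n + 1 + k), genHarmonic_succ _ (2 * n + 1 + k),
    genHarmonic_succ _ (2 * n + 1 + k + 1), genHarmonic_succ _ (2 * n + 1),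
    genHarmonic_succ _ (2 * n), genHarmonic_succ _ n, genHarmonic_succ _ k]
  push_cast
  simp only [div_eq_mul_inv, mul_inv] at key ⊢
  linear_combination 2 / 3 * wzWeight n k * key

theorem risingFactorial_ratio (n : ℕ) :
    (-1 / 4 : ℝ) ^ (n + 1) * risingFactorial 1 (n + 1) / risingFactorial (1 / 2) (n + 1) =
      -wzWeight n 0 * ((n : ℝ) + 1) / 2 := by
  induction n with
  | zero => norm_num [risingFactorial, wzWeight]
  | succ n ih =>
    have h₁ : risingFactorial 1 (n + 1 + 1) = risingFactorial 1 (n + 1) * ((n : ℝ) + 2) := by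
      rw [risingFactorial, Finset.prod_range_succ, ← risingFactorial]
      push_cast
      ring
    have h₂ : risingFactorial (1 / 2) (n + 1 + 1) =
        risingFactorial (1 / 2) (n + 1) * ((n : ℝ) + 3 / 2) := by
      rw [risingFactorial, Finset.prod_range_succ, ← risingFactorial]
      push_cast
      ring
    have h₃ : risingFactorial (1 / 2) (n + 1) ≠ 0 :=
      Finset.prod_ne_zero_iff.2 fun i _ => by positivity
    have h₄ : (-1 / 4 : ℝ) ^ (n + 1 + 1) * risingFactorial 1 (n + 1 + 1) /
        risingFactorial (1 / 2) (n + 1 + 1) =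
        ((-1 / 4 : ℝ) ^ (n + 1) * risingFactorial 1 (n + 1) / risingFactorial (1 / 2) (n + 1)) *
          (-1 / 4 * ((n : ℝ) + 2) / ((n : ℝ) + 3 / 2)) := by
      rw [h₁, h₂]
      field_simp
      ring
    rw [h₄, ih, wzWeight_succ_left]
    push_cast
    field_simp
    ring

/-- The summand of the series, in terms of the boundary values of the Wilf–Zeilberger pair. -/
theorem summand_eq_wzTerm_add_wzMate (n : ℕ) :
    (-1 / 4 : ℝ) ^ (n + 1) * risingFactorial 1 (n + 1) /
        risingFactorial (1 / 2) (n + 1) *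
        ((10 * ((n : ℝ) + 1) - 3) * genHarmonic 3 (n + 1) /
            (3 * ((n : ℝ) + 1) ^ 2 * (2 * ((n : ℝ) + 1) - 1)) -
          (38 * ((n : ℝ) + 1) - 17) /
            (3 * ((n : ℝ) + 1) ^ 5 * (2 * ((n : ℝ) + 1) - 1))) =
      wzTerm n 0 + wzMate n 0 := by
  rw [risingFactorial_ratio, wzTerm, wzMate]
  simp only [Nat.add_zero, genHarmonic_succ, genHarmonic_zero, Nat.cast_zero]
  push_cast
  have h : 2 * ((n : ℝ) + 1) - 1 = 2 * n + 1 := by ring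
  rw [h]
  field_simp
  ring

theorem genHarmonic_nonneg (s n : ℕ) : 0 ≤ genHarmonic s n :=
  Finset.sum_nonneg fun i _ => by positivity

theorem genHarmonic_le_self (s n : ℕ) : genHarmonic s n ≤ n := by
  refine (Finset.sum_le_card_nsmul _ _ 1 fun i _ => ?_).trans (by simp)
  rw [div_le_one (by positivity)]
  exact one_le_pow₀ (by linarith [(i.cast_nonneg : (0 : ℝ) ≤ i)])

theorem genHarmonic_le_two_mul_sqrt {s : ℕ} (hs : s ≠ 0) (n : ℕ) :
    genHarmonic s n ≤ 2 * √(n : ℝ) := by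
  induction n with
  | zero => simp [genHarmonic_zero]
  | succ n ih =>
    rw [genHarmonic_succ]
    have hn : (0 : ℝ) ≤ n := n.cast_nonneg
    have h₁ : 1 / ((n : ℝ) + 1) ^ s ≤ 1 / ((n : ℝ) + 1) :=
      one_div_le_one_div_of_le (by positivity) (le_self_pow₀ (by linarith) hs)
    push_cast
    have h₂ := Real.sq_sqrt hn
    have h₃ := Real.sq_sqrt (by positivity : (0 : ℝ) ≤ n + 1)
    have h₄ : √(n : ℝ) ≤ √((n : ℝ) + 1) := Real.sqrt_le_sqrt (by linarith)
    have h₅ : 1 ≤ √((n : ℝ) + 1) := Real.one_le_sqrt.2 (by linarith)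
    have h₆ : 1 / ((n : ℝ) + 1) ≤ 2 * (√((n : ℝ) + 1) - √(n : ℝ)) := by
      rw [div_le_iff₀ (by positivity)]
      have h₇ : (√((n : ℝ) + 1) - √(n : ℝ)) * (√((n : ℝ) + 1) + √(n : ℝ)) = 1 := by nlinarith
      nlinarith [Real.sqrt_nonneg (n : ℝ), mul_nonneg (sub_nonneg.2 h₄) (sub_nonneg.2 h₅),
        mul_nonneg (mul_nonneg (sub_nonneg.2 h₄) (sub_nonneg.2 h₅)) (zero_le_one.trans h₅)]
    linarith

theorem abs_wzWeight_le (n k : ℕ) : |wzWeight n k| ≤ (1 / 4) ^ n / ((k : ℝ) + 1) := by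
  induction k with
  | zero =>
    induction n with
    | zero => simp [wzWeight]
    | succ n ih =>
      rw [wzWeight_succ_left, mul_div_assoc, abs_mul, abs_neg]
      have h : |((n : ℝ) + 1) ^ 2 / ((2 * (n : ℝ) + 2 + (0 : ℕ)) * (2 * (n : ℝ) + 3 + (0 : ℕ)))| ≤
          1 / 4 := by
        rw [abs_of_nonneg (by positivity), div_le_div_iff₀ (by positivity) (by positivity)]
        push_cast
        nlinarith [(n.cast_nonneg : (0 : ℝ) ≤ n)]
      calc _ ≤ (1 / 4 : ℝ) ^ n / (((0 : ℕ) : ℝ) + 1) * (1 / 4) := by gcongr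
        _ = _ := by ring
  | succ k ih =>
    rw [wzWeight_succ_right, mul_div_assoc, abs_mul]
    have h : |((k : ℝ) + 1) / (2 * (n : ℝ) + 2 + k)| ≤ ((k : ℝ) + 1) / ((k + 1 : ℕ) + 1) := by
      rw [abs_of_nonneg (by positivity)]
      refine div_le_div_of_nonneg_left (by positivity) (by positivity) ?_
      push_cast
      linarith [(n.cast_nonneg : (0 : ℝ) ≤ n)]
    calc _ ≤ (1 / 4 : ℝ) ^ n / ((k : ℝ) + 1) * (((k : ℝ) + 1) / ((k + 1 : ℕ) + 1)) := by gcongr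
      _ = _ := by field_simp

theorem genHarmonic_le_mul_sqrt {s n k j : ℕ} (hs : s ≠ 0) (hj : j ≤ 2 * n + 2 + k) :
    genHarmonic s j ≤ 4 * ((n : ℝ) + 1) * √((k : ℝ) + 1) := by
  have hn : (0 : ℝ) ≤ n := n.cast_nonneg
  have hk : (0 : ℝ) ≤ k := k.cast_nonneg
  have hj' : (j : ℝ) ≤ 2 * n + 2 + k := by exact_mod_cast hj
  have h : √(j : ℝ) ≤ 2 * ((n : ℝ) + 1) * √((k : ℝ) + 1) := by
    rw [Real.sqrt_le_left (by positivity), mul_pow, Real.sq_sqrt (by positivity)]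
    nlinarith [mul_nonneg hn hk, mul_nonneg (mul_nonneg hn hk) hn]
  linarith [genHarmonic_le_two_mul_sqrt hs j]

theorem abs_wzTerm_le (n k : ℕ) :
    |wzTerm n k| ≤ 22 * (((n : ℝ) + 1) ^ 2 * (1 / 4) ^ n) *
      (√((k : ℝ) + 1) / ((k : ℝ) + 1) ^ 2) := by
  have hn : (0 : ℝ) ≤ n := n.cast_nonneg
  have hk : (0 : ℝ) ≤ k := k.cast_nonneg
  set B : ℝ := ((n : ℝ) + 1) * √((k : ℝ) + 1) with hB
  have hs : 1 ≤ √((k : ℝ) + 1) := Real.one_le_sqrt.2 (by linarith)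
  have hB1 : 1 ≤ B := by nlinarith
  have hH (s j : ℕ) (hs : s ≠ 0) (hj : j ≤ 2 * n + 2 + k) : genHarmonic s j ≤ 4 * B := by
    rw [hB, ← mul_assoc]
    exact genHarmonic_le_mul_sqrt hs hj
  have hp (j : ℕ) : 1 / ((n : ℝ) + 1 + k) ^ j ≤ 1 := by
    rw [div_le_one (by positivity)]
    exact one_le_pow₀ (by linarith)
  have hp0 (j : ℕ) : 0 ≤ 1 / ((n : ℝ) + 1 + k) ^ j := by positivity
  have hq : |1 / ((n : ℝ) + 1 + k) ^ 2 - genHarmonic 2 n| ≤ (n : ℝ) + 1 := by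
    rw [abs_le]
    constructor <;> linarith [hp 2, hp0 2, genHarmonic_nonneg 2 n, genHarmonic_le_self 2 n]
  have hT : |1 / ((n : ℝ) + 1 + k) + genHarmonic 1 (2 * n + 1 + k) - genHarmonic 1 k -
      genHarmonic 1 (n + 1 + k) + genHarmonic 1 n - genHarmonic 1 (2 * n)| ≤ 12 * B := by
    have h₁ := hH 1 (2 * n + 1 + k) one_ne_zero (by lia)
    have h₂ := hH 1 k one_ne_zero (by lia)
    have h₃ := hH 1 (n + 1 + k) one_ne_zero (by lia)
    have h₄ := hH 1 n one_ne_zero (by lia)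
    have h₅ := hH 1 (2 * n) one_ne_zero (by lia)
    have h₆ := hp 1
    have h₇ := hp0 1
    rw [pow_one] at h₆ h₇
    rw [abs_le]
    constructor <;> linarith [genHarmonic_nonneg 1 (2 * n + 1 + k), genHarmonic_nonneg 1 k,
      genHarmonic_nonneg 1 (n + 1 + k), genHarmonic_nonneg 1 n, genHarmonic_nonneg 1 (2 * n)]
  have hS : |5 / ((n : ℝ) + 1 + k) ^ 3 - 2 * genHarmonic 3 (n + 1 + k) + genHarmonic 3 n| ≤
      9 * B := by
    have h₁ := hH 3 (n + 1 + k) (by simp) (by lia)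
    have h₂ := hH 3 n (by simp) (by lia)
    rw [show 5 / ((n : ℝ) + 1 + k) ^ 3 = 5 * (1 / ((n : ℝ) + 1 + k) ^ 3) by ring, abs_le]
    constructor <;> linarith [genHarmonic_nonneg 3 (n + 1 + k), genHarmonic_nonneg 3 n, hp 3, hp0 3]
  have hm : 1 / ((n : ℝ) + 1 + k) ≤ 1 / ((k : ℝ) + 1) :=
    one_div_le_one_div_of_le (by positivity) (by linarith)
  rw [wzTerm, div_eq_mul_one_div, abs_mul, abs_mul, abs_mul,
    abs_of_pos (by positivity : (0 : ℝ) < 2 / 3),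
    abs_of_pos (by positivity : 0 < 1 / ((n : ℝ) + 1 + k))]
  calc _ ≤ 2 / 3 * ((1 / 4) ^ n / ((k : ℝ) + 1)) * (1 / ((k : ℝ) + 1)) *
        (9 * B + 2 * ((n : ℝ) + 1) * (12 * B)) := by
        gcongr
        · exact abs_wzWeight_le n k
        · refine (abs_add_le _ _).trans (add_le_add hS ?_)
          rw [abs_mul, abs_mul, abs_two]
          gcongr
    _ ≤ 2 / 3 * ((1 / 4) ^ n / ((k : ℝ) + 1)) * (1 / ((k : ℝ) + 1)) * (33 * ((n : ℝ) + 1) * B) := by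
        gcongr
        nlinarith
    _ = _ := by
        rw [hB]
        field_simp
        ring

theorem tendsto_sqrt_div_add_one_atTop :
    Filter.Tendsto (fun k : ℕ => √((k : ℝ) + 1) / ((k : ℝ) + 1)) Filter.atTop (nhds 0) := by
  simp_rw [Real.sqrt_div_self]
  refine tendsto_inv_atTop_zero.comp (Real.tendsto_sqrt_atTop.comp ?_)
  exact Filter.tendsto_atTop_add_const_right _ _ tendsto_natCast_atTop_atTop

theorem summable_sqrt_div_add_one_sq :
    Summable fun k : ℕ => √((k : ℝ) + 1) / ((k : ℝ) + 1) ^ 2 := by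
  have h := (summable_nat_add_iff 1).2
    (Real.summable_nat_rpow_inv.2 (by norm_num : (1 : ℝ) < 3 / 2))
  refine h.congr fun k => ?_
  have hk : (0 : ℝ) < (k : ℝ) + 1 := by positivity
  push_cast
  rw [Real.sqrt_eq_rpow, ← Real.rpow_natCast, ← Real.rpow_sub hk, ← Real.rpow_neg hk.le]
  norm_num

theorem tendsto_wzMate (n : ℕ) : Filter.Tendsto (wzMate n) Filter.atTop (nhds 0) := by
  have hn : (0 : ℝ) ≤ n := n.cast_nonneg
  set C : ℝ := 2 / 3 * ((n : ℝ) + 1) * (8 * (n + 2) + 16 * n * (2 * n + 3)) with hC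
  have hlim : Filter.Tendsto (fun k : ℕ => C * (√((k : ℝ) + 1) / ((k : ℝ) + 1)))
      Filter.atTop (nhds 0) := by
    simpa using tendsto_sqrt_div_add_one_atTop.const_mul C
  refine squeeze_zero_norm (fun k => ?_) hlim
  have hk : (0 : ℝ) ≤ k := k.cast_nonneg
  set B : ℝ := ((n : ℝ) + 1) * √((k : ℝ) + 1) with hB
  have hs : 1 ≤ √((k : ℝ) + 1) := Real.one_le_sqrt.2 (by linarith)
  have hB1 : 1 ≤ B := by nlinarith
  have hH (s j : ℕ) (hs : s ≠ 0) (hj : j ≤ 2 * n + 2 + k) : genHarmonic s j ≤ 4 * B := by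
    rw [hB, ← mul_assoc]
    exact genHarmonic_le_mul_sqrt hs hj
  have hW : |wzWeight n k| ≤ 1 / ((k : ℝ) + 1) :=
    (abs_wzWeight_le n k).trans (by gcongr; exact pow_le_one₀ (by norm_num) (by norm_num))
  have hd : 1 / ((2 * (n : ℝ) + 2 + k) * (2 * n + 1)) ≤ 1 / ((k : ℝ) + 1) :=
    one_div_le_one_div_of_le (by positivity) (by nlinarith [mul_nonneg hn hk])
  have hS : |genHarmonic 3 n - 2 * genHarmonic 3 (n + 1 + k)| ≤ 8 * B := by
    have h₁ := hH 3 (n + 1 + k) (by simp) (by lia)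
    have h₂ := hH 3 n (by simp) (by lia)
    rw [abs_le]
    constructor <;> linarith [genHarmonic_nonneg 3 (n + 1 + k), genHarmonic_nonneg 3 n]
  have hr {c : ℝ} (hc : 1 ≤ c) : 0 < 1 / c ∧ 1 / c ≤ 1 :=
    ⟨by positivity, (div_le_one (by positivity)).2 hc⟩
  have hT : |genHarmonic 1 (2 * n + 1 + k) + 1 / (2 * (n : ℝ) + 2 + k) - genHarmonic 1 k -
      genHarmonic 1 (n + 1 + k) + genHarmonic 1 n - genHarmonic 1 (2 * n) -
        1 / (2 * (n : ℝ) + 1)| ≤ 13 * B := by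
    have h₁ := hH 1 (2 * n + 1 + k) one_ne_zero (by lia)
    have h₂ := hH 1 k one_ne_zero (by lia)
    have h₃ := hH 1 (n + 1 + k) one_ne_zero (by lia)
    have h₄ := hH 1 n one_ne_zero (by lia)
    have h₅ := hH 1 (2 * n) one_ne_zero (by lia)
    have h₆ := hr (c := 2 * (n : ℝ) + 2 + k) (by linarith)
    have h₇ := hr (c := 2 * (n : ℝ) + 1) (by linarith)
    rw [abs_le]
    constructor <;> linarith [genHarmonic_nonneg 1 (2 * n + 1 + k), genHarmonic_nonneg 1 k,
      genHarmonic_nonneg 1 (n + 1 + k), genHarmonic_nonneg 1 n, genHarmonic_nonneg 1 (2 * n),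
      h₆.1, h₆.2, h₇.1, h₇.2]
  have h3 : |3 - 1 / (2 * (n : ℝ) + 2)| ≤ 3 := by
    have h := hr (c := 2 * (n : ℝ) + 2) (by linarith)
    rw [abs_le]
    constructor <;> linarith [h.1, h.2]
  rw [Real.norm_eq_abs, wzMate, div_eq_mul_one_div, abs_mul, abs_mul, abs_mul,
    abs_of_pos (by positivity : (0 : ℝ) < 2 / 3),
    abs_of_pos (by positivity : 0 < 1 / ((2 * (n : ℝ) + 2 + k) * (2 * n + 1)))]
  calc _ ≤ 2 / 3 * (1 / ((k : ℝ) + 1)) * (1 / ((k : ℝ) + 1)) *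
        (((n : ℝ) + 3 / 2 + k) * (8 * B) + n * (3 + (2 * (n : ℝ) + 3 + 2 * k) * (13 * B))) := by
        gcongr
        refine (abs_add_le _ _).trans (add_le_add ?_ ?_)
        · rw [abs_mul, abs_of_pos (by positivity : 0 < (n : ℝ) + 3 / 2 + k)]
          gcongr
        · rw [abs_mul, abs_of_nonneg (genHarmonic_nonneg 2 n)]
          refine mul_le_mul (genHarmonic_le_self 2 n) ?_ (abs_nonneg _) hn
          refine (abs_sub _ _).trans (add_le_add h3 ?_)
          rw [abs_mul, abs_of_pos (by positivity : 0 < 2 * (n : ℝ) + 3 + 2 * k)]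
          gcongr
    _ ≤ 2 / 3 * (1 / ((k : ℝ) + 1)) * (1 / ((k : ℝ) + 1)) *
        ((((n : ℝ) + 2) * (k + 1)) * (8 * B) +
          n * (((2 * (n : ℝ) + 3) * (k + 1)) * (16 * B))) := by
        have h₁ : (n : ℝ) + 3 / 2 + k ≤ ((n : ℝ) + 2) * (k + 1) := by nlinarith [mul_nonneg hn hk]
        have h₂ : 2 * (n : ℝ) + 3 + 2 * k ≤ (2 * (n : ℝ) + 3) * (k + 1) := by
          nlinarith [mul_nonneg hn hk]
        have h₃ : 3 + (2 * (n : ℝ) + 3 + 2 * k) * (13 * B) ≤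
            ((2 * (n : ℝ) + 3) * (k + 1)) * (16 * B) := by
          nlinarith [mul_le_mul_of_nonneg_right h₂ (by positivity : 0 ≤ 16 * B),
            mul_nonneg hn (zero_le_one.trans hB1), mul_nonneg hk (zero_le_one.trans hB1)]
        gcongr
    _ = _ := by
        rw [hB, hC]
        field_simp

theorem summable_wzTerm (n : ℕ) : Summable (wzTerm n) :=
  .of_norm_bounded (summable_sqrt_div_add_one_sq.mul_left _) (abs_wzTerm_le n)

theorem tsum_wzTerm_sub (n : ℕ) :
    ∑' k, wzTerm n k - ∑' k, wzTerm (n + 1) k = wzTerm n 0 + wzMate n 0 := by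
  have h₁ : Summable fun k => wzTerm n (k + 1) := (summable_nat_add_iff 1).2 (summable_wzTerm n)
  have h₂ : ∑' k, (wzTerm n (k + 1) - wzTerm (n + 1) k) = wzMate n 0 := by
    refine tendsto_nhds_unique (h₁.sub (summable_wzTerm (n + 1))).hasSum.tendsto_sum_nat ?_
    simp_rw [wzTerm_sub_wzTerm, Finset.sum_range_sub']
    simpa using (tendsto_wzMate n).const_sub (wzMate n 0)
  rw [h₁.tsum_sub (summable_wzTerm (n + 1))] at h₂
  rw [(summable_wzTerm n).tsum_eq_zero_add]
  linarith

theorem summable_tsum_wzTerm : Summable fun n => ∑' k, wzTerm n k := by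
  have h : Summable fun n : ℕ => ((n : ℝ) + 1) ^ 2 * (1 / 4 : ℝ) ^ n := by
    have h₀ : Summable fun n : ℕ => ((n + 1 : ℕ) : ℝ) ^ 2 * (1 / 4 : ℝ) ^ (n + 1) :=
      (summable_nat_add_iff (f := fun n : ℕ => (n : ℝ) ^ 2 * (1 / 4 : ℝ) ^ n) 1).2
        (summable_pow_mul_geometric_of_norm_lt_one 2 (by norm_num))
    refine (h₀.mul_left 4).congr fun n => ?_
    push_cast
    ring
  refine .of_norm_bounded
    ((h.mul_left 22).mul_right (∑' k : ℕ, √((k : ℝ) + 1) / ((k : ℝ) + 1) ^ 2)) fun n => ?_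
  rw [← tsum_mul_left]
  exact tsum_of_norm_bounded (summable_sqrt_div_add_one_sq.mul_left _).hasSum (abs_wzTerm_le n)

theorem hasSum_wzTerm_add_wzMate :
    HasSum (fun n => wzTerm n 0 + wzMate n 0) (∑' k, wzTerm 0 k) := by
  simp_rw [← tsum_wzTerm_sub]
  have hs := summable_tsum_wzTerm.sub ((summable_nat_add_iff 1).2 summable_tsum_wzTerm)
  refine (hs.hasSum_iff_tendsto_nat).2 ?_
  simp_rw [Finset.sum_range_sub' fun n => ∑' k, wzTerm n k]
  simpa using summable_tsum_wzTerm.tendsto_atTop_zero.const_sub (∑' k, wzTerm 0 k)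

/-- The double zeta value `∑_{m > l ≥ 1} 1 / (m ^ p * l ^ q)`. -/
noncomputable def doubleZeta (p q : ℕ) : ℝ :=
  ∑' n : ℕ, genHarmonic q n / ((n : ℝ) + 1) ^ p

theorem summable_doubleZeta {p q : ℕ} (hp : 2 ≤ p) (hq : q ≠ 0) :
    Summable fun n : ℕ => genHarmonic q n / ((n : ℝ) + 1) ^ p := by
  refine .of_nonneg_of_le (fun n => div_nonneg (genHarmonic_nonneg q n) (by positivity))
    (fun n => ?_) (summable_sqrt_div_add_one_sq.mul_left 2)
  rw [← mul_div_assoc]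
  have hn : (0 : ℝ) ≤ n := n.cast_nonneg
  have h : √(n : ℝ) ≤ √((n : ℝ) + 1) := Real.sqrt_le_sqrt (by linarith)
  have h' := genHarmonic_le_two_mul_sqrt hq n
  gcongr
  · linarith
  · linarith

theorem hasSum_doubleZeta_succ {p q : ℕ} (hp : 2 ≤ p) (hq : q ≠ 0) :
    HasSum (fun n : ℕ => genHarmonic q (n + 1) / ((n : ℝ) + 2) ^ p) (doubleZeta p q) := by
  have h := (hasSum_nat_add_iff' 1).2 (summable_doubleZeta hp hq).hasSum
  simp only [Finset.range_one, Finset.sum_singleton, genHarmonic_zero, zero_div, sub_zero] at h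
  refine h.congr_fun fun n => ?_
  push_cast
  ring

theorem summable_one_div_add_one_pow {p : ℕ} (hp : 2 ≤ p) :
    Summable fun n : ℕ => 1 / ((n : ℝ) + 1) ^ p := by
  have h := (summable_nat_add_iff 1).2 (Real.summable_one_div_nat_pow.2 hp)
  exact h.congr fun n => by push_cast; rfl

theorem tsum_mul_tsum_eq_doubleZeta_add {p q : ℕ} (hp : 2 ≤ p) (hq : 2 ≤ q) :
    (∑' n : ℕ, 1 / ((n : ℝ) + 1) ^ p) * ∑' n : ℕ, 1 / ((n : ℝ) + 1) ^ q =
      doubleZeta p q + doubleZeta q p + ∑' n : ℕ, 1 / ((n : ℝ) + 1) ^ (p + q) := by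
  have hsum := ((summable_doubleZeta hp (by lia : q ≠ 0)).hasSum.add
    (summable_doubleZeta hq (by lia : p ≠ 0)).hasSum).add
      (summable_one_div_add_one_pow (by lia : 2 ≤ p + q)).hasSum
  refine tendsto_nhds_unique ((summable_one_div_add_one_pow hp).hasSum.tendsto_sum_nat.mul
    (summable_one_div_add_one_pow hq).hasSum.tendsto_sum_nat)
    (hsum.tendsto_sum_nat.congr fun N => ?_)
  change _ = genHarmonic p N * genHarmonic q N
  induction N with
  | zero => simp [genHarmonic_zero]
  | succ N ih =>
    rw [Finset.sum_range_succ, ih, genHarmonic_succ, genHarmonic_succ]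
    field_simp
    ring

theorem sum_antidiagonal_one_div_fst (s n : ℕ) :
    ∑ x ∈ Finset.HasAntidiagonal.antidiagonal n, 1 / ((x.1 : ℝ) + 1) ^ s =
      genHarmonic s (n + 1) := by
  rw [Finset.Nat.sum_antidiagonal_eq_sum_range_succ fun i _ => 1 / ((i : ℝ) + 1) ^ s, genHarmonic]

theorem sum_antidiagonal_one_div_snd (s n : ℕ) :
    ∑ x ∈ Finset.HasAntidiagonal.antidiagonal n, 1 / ((x.2 : ℝ) + 1) ^ s =
      genHarmonic s (n + 1) := by
  rw [← sum_antidiagonal_one_div_fst, ← Finset.Nat.sum_antidiagonal_swap]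
  rfl

theorem tsum_prod_eq_tsum_sum_antidiagonal {f : ℕ × ℕ → ℝ} (hf : Summable f) :
    ∑' x, f x = ∑' n, ∑ x ∈ Finset.HasAntidiagonal.antidiagonal n, f x := by
  conv_rhs => congr; ext; rw [← Finset.sum_finset_coe, ← tsum_fintype (L := .unconditional _)]
  rw [← Finset.HasAntidiagonal.sigmaAntidiagonalEquivProd.tsum_eq]
  exact (Finset.HasAntidiagonal.sigmaAntidiagonalEquivProd.summable_iff.2 hf).tsum_sigma'
    fun n => (hasSum_fintype _).summable

theorem tsum_two_mul_tsum_three_eq_doubleZeta :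
    (∑' n : ℕ, 1 / ((n : ℝ) + 1) ^ 2) * ∑' n : ℕ, 1 / ((n : ℝ) + 1) ^ 3 =
      doubleZeta 2 3 + 3 * doubleZeta 3 2 + 6 * doubleZeta 4 1 := by
  rw [tsum_mul_tsum_eq_tsum_sum_antidiagonal_of_summable_norm
    (summable_one_div_add_one_pow le_rfl).norm (summable_one_div_add_one_pow (by simp)).norm]
  have h := ((hasSum_doubleZeta_succ le_rfl (by simp : 3 ≠ 0)).add
    ((hasSum_doubleZeta_succ (by simp : 2 ≤ 3) two_ne_zero).mul_left 3)).add
      ((hasSum_doubleZeta_succ (by simp : 2 ≤ 4) one_ne_zero).mul_left 6)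
  rw [← h.tsum_eq]
  refine tsum_congr fun n => ?_
  have hpf : ∀ x ∈ Finset.HasAntidiagonal.antidiagonal n,
      1 / ((x.1 : ℝ) + 1) ^ 2 * (1 / ((x.2 : ℝ) + 1) ^ 3) =
        1 / ((n : ℝ) + 2) ^ 2 * (1 / ((x.2 : ℝ) + 1) ^ 3) +
          2 / ((n : ℝ) + 2) ^ 3 * (1 / ((x.2 : ℝ) + 1) ^ 2) +
          3 / ((n : ℝ) + 2) ^ 4 * (1 / ((x.2 : ℝ) + 1) ^ 1) +
          1 / ((n : ℝ) + 2) ^ 3 * (1 / ((x.1 : ℝ) + 1) ^ 2) +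
          3 / ((n : ℝ) + 2) ^ 4 * (1 / ((x.1 : ℝ) + 1) ^ 1) := by
    intro x hx
    rw [← Finset.HasAntidiagonal.mem_antidiagonal.1 hx]
    push_cast
    have h₀ : (x.1 : ℝ) + x.2 + 2 ≠ 0 := by positivity
    field_simp
    ring
  rw [Finset.sum_congr rfl hpf]
  simp only [Finset.sum_add_distrib, ← Finset.mul_sum, sum_antidiagonal_one_div_fst,
    sum_antidiagonal_one_div_snd]
  ring

theorem hasSum_one_div_sub_one_div (a : ℕ) :
    HasSum (fun d : ℕ => 1 / ((d : ℝ) + 1) - 1 / ((d : ℝ) + 1 + a)) (genHarmonic 1 a) := by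
  induction a with
  | zero => simp [genHarmonic_zero]
  | succ a ih =>
    have h : HasSum (fun d : ℕ => 1 / ((d : ℝ) + 1 + a) - 1 / ((d : ℝ) + 1 + (a + 1)))
        (1 / ((a : ℝ) + 1)) := by
      refine (hasSum_iff_tendsto_nat_of_nonneg (fun d => sub_nonneg.2 ?_) _).2 ?_
      · exact one_div_le_one_div_of_le (by positivity) (by linarith)
      · have htel (N : ℕ) : ∑ d ∈ Finset.range N,
            (1 / ((d : ℝ) + 1 + a) - 1 / ((d : ℝ) + 1 + (a + 1))) =
              1 / ((a : ℝ) + 1) - 1 / ((N : ℝ) + (a + 1)) := by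
          induction N with
          | zero => simp
          | succ N ihN =>
            rw [Finset.sum_range_succ, ihN]
            push_cast
            ring
        simp_rw [htel]
        have hlim : Filter.Tendsto (fun N : ℕ => 1 / ((N : ℝ) + (a + 1))) Filter.atTop (nhds 0) :=
          (Filter.tendsto_atTop_add_const_right _ _ tendsto_natCast_atTop_atTop).const_div_atTop 1
        simpa using hlim.const_sub (1 / ((a : ℝ) + 1))
    rw [genHarmonic_succ, pow_one]
    refine (ih.add h).congr_fun fun d => ?_
    push_cast
    ring

theorem doubleZeta_add_eq_tsum_five :
    doubleZeta 2 3 + doubleZeta 3 2 + doubleZeta 4 1 = ∑' n : ℕ, 1 / ((n : ℝ) + 1) ^ 5 := by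
  have hrow (j : ℕ) : HasSum
      (fun d : ℕ => 1 / (((j : ℝ) + 1) ^ 3 * ((d : ℝ) + 1) * ((j : ℝ) + d + 2)))
      (genHarmonic 1 j / ((j : ℝ) + 1) ^ 4 + 1 / ((j : ℝ) + 1) ^ 5) := by
    have h := (hasSum_one_div_sub_one_div (j + 1)).mul_left (1 / ((j : ℝ) + 1) ^ 4)
    rw [genHarmonic_succ] at h
    rw [show genHarmonic 1 j / ((j : ℝ) + 1) ^ 4 + 1 / ((j : ℝ) + 1) ^ 5 =
      1 / ((j : ℝ) + 1) ^ 4 * (genHarmonic 1 j + 1 / ((j : ℝ) + 1) ^ 1) by field_simp]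
    refine h.congr_fun fun d => ?_
    have h₀ : (d : ℝ) + 1 + (j + 1) ≠ 0 := by positivity
    have h₁ : (j : ℝ) + d + 2 ≠ 0 := by positivity
    push_cast
    field_simp
    ring
  have hcol := (summable_doubleZeta (by simp : 2 ≤ 4) one_ne_zero).hasSum.add
    (summable_one_div_add_one_pow (by simp : 2 ≤ 5)).hasSum
  have hs : Summable fun x : ℕ × ℕ =>
      1 / (((x.1 : ℝ) + 1) ^ 3 * ((x.2 : ℝ) + 1) * ((x.1 : ℝ) + x.2 + 2)) := by
    refine (summable_prod_of_nonneg fun x => by positivity).2 ⟨fun j => (hrow j).summable, ?_⟩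
    simp_rw [(hrow _).tsum_eq]
    exact hcol.summable
  have h₁ := hs.tsum_prod
  simp_rw [(hrow _).tsum_eq] at h₁
  rw [hcol.tsum_eq] at h₁
  have h₂ := ((hasSum_doubleZeta_succ le_rfl (by simp : 3 ≠ 0)).add
    (hasSum_doubleZeta_succ (by simp : 2 ≤ 3) two_ne_zero)).add
      ((hasSum_doubleZeta_succ (by simp : 2 ≤ 4) one_ne_zero).mul_left 2)
  have h₃ (n : ℕ) : ∑ x ∈ Finset.HasAntidiagonal.antidiagonal n,
      1 / (((x.1 : ℝ) + 1) ^ 3 * ((x.2 : ℝ) + 1) * ((x.1 : ℝ) + x.2 + 2)) =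
        genHarmonic 3 (n + 1) / ((n : ℝ) + 2) ^ 2 + genHarmonic 2 (n + 1) / ((n : ℝ) + 2) ^ 3 +
          2 * (genHarmonic 1 (n + 1) / ((n : ℝ) + 2) ^ 4) := by
    have hpf : ∀ x ∈ Finset.HasAntidiagonal.antidiagonal n,
        1 / (((x.1 : ℝ) + 1) ^ 3 * ((x.2 : ℝ) + 1) * ((x.1 : ℝ) + x.2 + 2)) =
          1 / ((n : ℝ) + 2) ^ 2 * (1 / ((x.1 : ℝ) + 1) ^ 3) +
            1 / ((n : ℝ) + 2) ^ 3 * (1 / ((x.1 : ℝ) + 1) ^ 2) +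
            1 / ((n : ℝ) + 2) ^ 4 * (1 / ((x.1 : ℝ) + 1) ^ 1) +
            1 / ((n : ℝ) + 2) ^ 4 * (1 / ((x.2 : ℝ) + 1) ^ 1) := by
      intro x hx
      rw [← Finset.HasAntidiagonal.mem_antidiagonal.1 hx]
      push_cast
      have h₀ : (x.1 : ℝ) + x.2 + 2 ≠ 0 := by positivity
      field_simp
      ring
    rw [Finset.sum_congr rfl hpf]
    simp only [Finset.sum_add_distrib, ← Finset.mul_sum, sum_antidiagonal_one_div_fst,
      sum_antidiagonal_one_div_snd]
    ring
  rw [tsum_prod_eq_tsum_sum_antidiagonal hs, tsum_congr h₃, h₂.tsum_eq, ← doubleZeta] at h₁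
  linarith

theorem wzTerm_zero (k : ℕ) :
    wzTerm 0 k = 2 / 3 * (5 * (1 / ((k : ℝ) + 1) ^ 5) - 2 * (genHarmonic 3 k / ((k : ℝ) + 1) ^ 2) -
      2 * (genHarmonic 1 k / ((k : ℝ) + 1) ^ 4)) := by
  have hW : wzWeight 0 k = 1 / ((k : ℝ) + 1) := by
    have h₀ : (k.factorial : ℝ) ≠ 0 := by positivity
    rw [wzWeight, show 2 * 0 + 1 + k = k + 1 by ring, Nat.factorial_succ]
    push_cast
    field_simp
    simp
  rw [wzTerm, hW, show 2 * 0 + 1 + k = k + 1 by ring]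
  simp only [genHarmonic_succ, genHarmonic_zero, Nat.cast_zero, mul_zero]
  have h : (0 : ℝ) + 1 + k = k + 1 := by ring
  rw [h]
  field_simp
  ring

theorem tsum_wzTerm_zero :
    ∑' k, wzTerm 0 k = -(16 / 3) * ∑' n : ℕ, 1 / ((n : ℝ) + 1) ^ 5 +
      4 * (∑' n : ℕ, 1 / ((n : ℝ) + 1) ^ 2) * ∑' n : ℕ, 1 / ((n : ℝ) + 1) ^ 3 := by
  have h := (((summable_one_div_add_one_pow (by simp : 2 ≤ 5)).hasSum.mul_left 5).sub
    ((summable_doubleZeta (le_refl 2) (by simp : 3 ≠ 0)).hasSum.mul_left 2)).sub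
      ((summable_doubleZeta (by simp : 2 ≤ 4) one_ne_zero).hasSum.mul_left 2)
  simp_rw [wzTerm_zero]
  rw [(h.mul_left (2 / 3)).tsum_eq, ← doubleZeta, ← doubleZeta]
  have h₁ := tsum_mul_tsum_eq_doubleZeta_add (le_refl 2) (by simp : 2 ≤ 3)
  have h₂ := tsum_two_mul_tsum_three_eq_doubleZeta
  have h₃ := doubleZeta_add_eq_tsum_five
  linarith

theorem riemannZeta_eq_ofReal_tsum {p : ℕ} (hp : 1 < p) :
    riemannZeta p = ((∑' n : ℕ, 1 / ((n : ℝ) + 1) ^ p : ℝ) : ℂ) := by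
  rw [zeta_eq_tsum_one_div_nat_add_one_cpow (by simpa using hp), Complex.ofReal_tsum]
  refine tsum_congr fun n => ?_
  rw [Complex.cpow_natCast]
  push_cast
  rfl

/-- `∑_{n≥1} (−1/4)^n (1)ₙ/(1/2)ₙ [ (10n−3)H_n^{(3)}/(3n²(2n−1)) − (38n−17)/(3n^5(2n−1)) ]
    = −(16/3)ζ(5) + (2/3)π²ζ(3)`. -/
theorem harmonic3_zeta5_series :
    ∑' n : ℕ, ((((-1 / 4 : ℝ) ^ (n + 1) * risingFactorial 1 (n + 1) /
        risingFactorial (1 / 2) (n + 1) *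
        ((10 * ((n : ℝ) + 1) - 3) * genHarmonic 3 (n + 1) /
            (3 * ((n : ℝ) + 1) ^ 2 * (2 * ((n : ℝ) + 1) - 1)) -
          (38 * ((n : ℝ) + 1) - 17) /
            (3 * ((n : ℝ) + 1) ^ 5 * (2 * ((n : ℝ) + 1) - 1))) : ℝ)) : ℂ)
      = -(16 / 3) * riemannZeta 5 + 2 / 3 * (Real.pi : ℂ) ^ 2 * riemannZeta 3 := by
  have h₂ : ∑' n : ℕ, 1 / ((n : ℝ) + 1) ^ 2 = Real.pi ^ 2 / 6 := by
    have h := (hasSum_nat_add_iff' 1).2 hasSum_zeta_two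
    simpa using h.tsum_eq
  have h₃ := riemannZeta_eq_ofReal_tsum (by simp : 1 < 3)
  have h₅ := riemannZeta_eq_ofReal_tsum (by simp : 1 < 5)
  rw [Nat.cast_ofNat] at h₃ h₅
  rw [← Complex.ofReal_tsum, tsum_congr summand_eq_wzTerm_add_wzMate,
    hasSum_wzTerm_add_wzMate.tsum_eq, tsum_wzTerm_zero, h₂, h₃, h₅]
  push_cast
  ring
end
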